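/- arXiv:q-alg/9505024 — 3 statements merged into one kernel-verified Lean document; each statement's English description precedes it below -/
import Mathlib

section
/- Let A be a finite-dimensional Hopf algebra over a field k, with basis {a_t} of A and dual basis {x_t} of A*. In the Drinfeld double D(A), the element d₀ = Σ_t S²(a_t)·x_t is invertible with inverse d₀⁻¹ = Σ_t S⁻¹(a_t)·x_t. -/
/-- A finite-dimensional Hopf algebra over a field `k`, presented by structure
constants with respect to a finite basis indexed by `ι`.  The underlying space
of the Hopf algebra `A` is `ι → k` (with basis the delta functions `e i`), and
its dual Hopf algebra `A*` is also modelled on `ι → k` (using the dual basis).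

* `mul s t r` is the coefficient of `e r` in `e s * e t`;
* `one` is the coefficient vector of the unit of `A`;
* `comul r s t` is the coefficient of `e s ⊗ e t` in `Δ (e r)`;
* `counit t` is `ε (e t)`;
* `S t r` is the coefficient of `e r` in the antipode `S (e t)`, and `Sinv` is
  the matrix of the (composition) inverse of the antipode.

The axioms express associativity, unitality, coassociativity, counitality,
that `Δ` and `ε` are algebra maps, the antipode identities, and that `Sinv`
is inverse to `S`. -/
structure FinHopfSC (k : Type*) [Field k] (ι : Type*) [Fintype ι] [DecidableEq ι] where
  mul : ι → ι → ι → k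
  one : ι → k
  comul : ι → ι → ι → k
  counit : ι → k
  S : ι → ι → k
  Sinv : ι → ι → k
  assoc : ∀ a b c r, (∑ s, mul a b s * mul s c r) = ∑ s, mul b c s * mul a s r
  one_mul : ∀ b r, (∑ s, one s * mul s b r) = if b = r then 1 else 0
  mul_one : ∀ a r, (∑ s, one s * mul a s r) = if a = r then 1 else 0
  coassoc : ∀ r a b c, (∑ s, comul r s c * comul s a b) = ∑ s, comul r a s * comul s b c
  counit_comul : ∀ r t, (∑ s, comul r s t * counit s) = if r = t then 1 else 0
  comul_counit : ∀ r t, (∑ s, comul r t s * counit s) = if r = t then 1 else 0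
  comul_mul : ∀ a b s t, (∑ r, mul a b r * comul r s t) =
      ∑ a1, ∑ a2, ∑ b1, ∑ b2, comul a a1 a2 * comul b b1 b2 * mul a1 b1 s * mul a2 b2 t
  counit_mul : ∀ a b, (∑ r, mul a b r * counit r) = counit a * counit b
  comul_one : ∀ s t, (∑ r, one r * comul r s t) = one s * one t
  counit_one : (∑ r, one r * counit r) = 1
  antipode_left : ∀ r t, (∑ a, ∑ b, ∑ s, comul r a b * S a s * mul s b t) = counit r * one t
  antipode_right : ∀ r t, (∑ a, ∑ b, ∑ s, comul r a b * S b s * mul a s t) = counit r * one t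
  S_Sinv : ∀ a r, (∑ s, S a s * Sinv s r) = if a = r then 1 else 0
  Sinv_S : ∀ a r, (∑ s, Sinv a s * S s r) = if a = r then 1 else 0

namespace FinHopfSC

variable {k : Type*} [Field k] {ι : Type*} [Fintype ι] [DecidableEq ι]
variable (H : FinHopfSC k ι)

/-- the `i`-th basis vector `a_i` of `A` (equally, the `i`-th dual basis vector
`x_i` of `A*`). -/
def e (i : ι) : ι → k := fun j => if i = j then 1 else 0

/-- the product of `A`. -/
def mulA (a b : ι → k) : ι → k := fun r => ∑ s, ∑ t, a s * b t * H.mul s t r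

/-- the unit of `A`. -/
def oneA : ι → k := H.one

/-- the (convolution) product of the dual Hopf algebra `A*`:
`⟨x y, a⟩ = ⟨x ⊗ y, Δ a⟩`. -/
def mulX (x y : ι → k) : ι → k := fun r => ∑ s, ∑ t, H.comul r s t * x s * y t

/-- the unit of `A*` (the counit of `A`). -/
def oneX : ι → k := H.counit

/-- the antipode of `A`. -/
def SA (a : ι → k) : ι → k := fun r => ∑ t, a t * H.S t r

/-- the inverse of the antipode of `A`. -/
def SAinv (a : ι → k) : ι → k := fun r => ∑ t, a t * H.Sinv t r

/-- the antipode of `A*` (the transpose of the antipode of `A`). -/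
def SX (x : ι → k) : ι → k := fun t => ∑ r, H.S t r * x r

/-- the inverse of the antipode of `A*`. -/
def SXinv (x : ι → k) : ι → k := fun t => ∑ r, H.Sinv t r * x r

/-- the left regular action `a ⇀ x = x₍₁₎ ⟨x₍₂₎, a⟩` of `A` on `A*`, i.e.
`⟨a ⇀ x, b⟩ = ⟨x, b a⟩`. -/
def hit (a x : ι → k) : ι → k := fun r => ∑ s, ∑ t, a s * H.mul r s t * x t

/-- the left adjoint action `ad_x y = x₍₂₎ y S⁻¹(x₍₁₎)` of `A*` (as the Hopf
algebra `A*` with the opposite coproduct) on `A*`. -/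
def adX (x y : ι → k) : ι → k := fun r =>
  ∑ p, ∑ a, ∑ b, H.mul a b p * x p * (H.mulX (e b) (H.mulX y (H.SXinv (e a)))) r

end FinHopfSC

namespace FinHopfSC

variable {k : Type*} [Field k] {ι : Type*} [Fintype ι] [DecidableEq ι]
variable (H : FinHopfSC k ι)

/-- the element `a_a ▷ x_d = (a_a)₍₁₎ ⇀ x_d ↼ S⁻¹((a_a)₍₂₎)` of `A*`
(the left coadjoint action of `A` on `A*`), written in coordinates. -/
def rtri (a d : ι) : ι → k := fun d' =>
  ∑ m, ∑ n, ∑ u, ∑ w, H.comul a m n * H.mul u m d * H.Sinv n w * H.mul w d' u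

/-- the element `a_b ◁ x_c = S⁻¹((x_c)₍₁₎) ⇀ a_b ↼ (x_c)₍₂₎` of `A`
(the right coadjoint action of `A*` on `A`), written in coordinates. -/
def ltri (b c : ι) : ι → k := fun p' =>
  ∑ g, ∑ h1, ∑ b2, ∑ q', H.mul g h1 c * H.comul b h1 b2 * H.comul b2 p' q' * H.Sinv q' g

end FinHopfSC

namespace FinHopfSC
section aux
variable {k : Type*} [Field k] {ι : Type*} [Fintype ι] [DecidableEq ι]
variable (H : FinHopfSC k ι)

/-- The carrier of the algebra `A`. -/
def HA (_ : FinHopfSC k ι) : Type _ := ι → k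

instance : AddCommGroup H.HA := inferInstanceAs (AddCommGroup (ι → k))
instance : Module k H.HA := inferInstanceAs (Module k (ι → k))

/-- Basis vector. -/
def E (i : ι) : H.HA := (e i : ι → k)

theorem sum_E (a : H.HA) : a = ∑ i, (a : ι → k) i • H.E i := by
  funext j
  have : ∀ f : ι → H.HA, (∑ i, f i : H.HA) j = ∑ i, (f i : ι → k) j := fun f =>
    Finset.sum_apply (M := fun _ : ι => k) j Finset.univ f
  rw [this]
  have h2 : ∀ i, ((a : ι → k) i • H.E i : H.HA) j = (a : ι → k) i * (e i : ι → k) j := fun i => rfl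
  simp only [h2, e, mul_ite, _root_.mul_one, mul_zero]
  exact (Fintype.sum_ite_eq' j (a : ι → k)).symm

theorem lin_ext {M : Type*} [AddCommMonoid M] [Module k M] {f g : H.HA →ₗ[k] M}
    (h : ∀ i, f (H.E i) = g (H.E i)) : f = g := by
  ext a
  rw [H.sum_E a]
  simp [h]

/-- Product as a bilinear map. -/
def mulL : H.HA →ₗ[k] H.HA →ₗ[k] H.HA :=
  LinearMap.mk₂ k (fun a b => H.mulA a b)
    (by intro a b c; funext r; change H.mulA (fun i => a i + b i) c r = H.mulA a c r + H.mulA b c r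
        simp [mulA, add_mul, Finset.sum_add_distrib])
    (by intro t a c; funext r; change H.mulA (fun i => t * a i) c r = t * H.mulA a c r
        simp [mulA, Finset.mul_sum, mul_assoc])
    (by intro a b c; funext r; change H.mulA a (fun i => b i + c i) r = H.mulA a b r + H.mulA a c r
        simp [mulA, add_mul, mul_add, Finset.sum_add_distrib])
    (by intro t a c; funext r; change H.mulA a (fun i => t * c i) r = t * H.mulA a c r
        simp [mulA, Finset.mul_sum, mul_assoc, mul_left_comm])

theorem sum_E' (f : ι → k) : (∑ i, f i • H.E i) = (f : H.HA) := (H.sum_E f).symm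

theorem mulL_E (s t : ι) : H.mulL (H.E s) (H.E t) = ∑ r, H.mul s t r • H.E r := by
  rw [H.sum_E']
  funext r
  change H.mulA (e s) (e t) r = _
  simp [mulA, e]

theorem mulL_assoc (a b c : H.HA) : H.mulL (H.mulL a b) c = H.mulL a (H.mulL b c) := by
  have hE : ∀ x y z, H.mulL (H.mulL (H.E x) (H.E y)) (H.E z) =
      H.mulL (H.E x) (H.mulL (H.E y) (H.E z)) := by
    intro x y z
    simp only [map_sum, map_smul, LinearMap.sum_apply, LinearMap.smul_apply, mulL_E,
      Finset.smul_sum, smul_smul]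
    rw [Finset.sum_comm]
    conv_rhs => rw [Finset.sum_comm]
    simp only [← Finset.sum_smul, H.assoc]
  rw [H.sum_E a]
  simp only [map_sum, map_smul, LinearMap.sum_apply, LinearMap.smul_apply]
  refine Finset.sum_congr rfl fun x _ => congrArg _ ?_
  rw [H.sum_E b]
  simp only [map_sum, map_smul, LinearMap.sum_apply, LinearMap.smul_apply]
  refine Finset.sum_congr rfl fun y _ => congrArg _ ?_
  rw [H.sum_E c]
  simp only [map_sum, map_smul, hE]

theorem oneE : (H.oneA : H.HA) = ∑ r, H.one r • H.E r := by
  rw [H.sum_E']; rfl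

theorem E_sum_ite (b : ι) : (∑ r, (if b = r then (1:k) else 0) • H.E r) = H.E b := by
  simp

theorem mulL_one (a : H.HA) : H.mulL a H.oneA = a := by
  have : H.mulL.flip H.oneA = LinearMap.id := by
    apply H.lin_ext
    intro i
    rw [oneE]
    simp only [map_sum, map_smul, LinearMap.sum_apply, LinearMap.smul_apply, LinearMap.flip_apply,
      mulL_E, Finset.smul_sum, smul_smul]
    rw [Finset.sum_comm]
    simp only [← Finset.sum_smul, H.mul_one]
    simp
  exact LinearMap.congr_fun this a

theorem one_mulL (a : H.HA) : H.mulL H.oneA a = a := by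
  have : H.mulL H.oneA = LinearMap.id := by
    apply H.lin_ext
    intro i
    rw [oneE]
    simp only [map_sum, map_smul, LinearMap.sum_apply, LinearMap.smul_apply,
      mulL_E, Finset.smul_sum, smul_smul]
    rw [Finset.sum_comm]
    simp only [← Finset.sum_smul, H.one_mul]
    simp
  exact LinearMap.congr_fun this a

instance : Ring H.HA :=
  { (inferInstance : AddCommGroup H.HA) with
    mul := fun a b => H.mulL a b
    one := H.oneA
    mul_assoc := H.mulL_assoc
    one_mul := H.one_mulL
    mul_one := H.mulL_one
    left_distrib := fun a b c => map_add (H.mulL a) b c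
    right_distrib := fun a b c => LinearMap.map_add₂ H.mulL a b c
    zero_mul := fun a => LinearMap.map_zero₂ H.mulL a
    mul_zero := fun a => map_zero (H.mulL a) }

instance : Algebra k H.HA := Algebra.ofModule
  (fun t a b => LinearMap.map_smul₂ H.mulL t a b)
  (fun t a b => map_smul (H.mulL a) t b)

theorem E_mul (s t : ι) : H.E s * H.E t = ∑ r, H.mul s t r • H.E r := H.mulL_E s t

theorem one_E : (1 : H.HA) = ∑ r, H.one r • H.E r := H.oneE

/-- antipode -/
def SL : H.HA →ₗ[k] H.HA where
  toFun a := H.SA a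
  map_add' a b := by
    funext r; change H.SA (fun i => a i + b i) r = H.SA a r + H.SA b r
    simp [SA, add_mul, Finset.sum_add_distrib]
  map_smul' t a := by
    funext r; change H.SA (fun i => t * a i) r = t * H.SA a r
    simp [SA, Finset.mul_sum, mul_assoc]

/-- inverse antipode -/
def TL : H.HA →ₗ[k] H.HA where
  toFun a := H.SAinv a
  map_add' a b := by
    funext r; change H.SAinv (fun i => a i + b i) r = H.SAinv a r + H.SAinv b r
    simp [SAinv, add_mul, Finset.sum_add_distrib]
  map_smul' t a := by
    funext r; change H.SAinv (fun i => t * a i) r = t * H.SAinv a r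
    simp [SAinv, Finset.mul_sum, mul_assoc]

theorem SL_E (s : ι) : H.SL (H.E s) = ∑ r, H.S s r • H.E r := by
  rw [H.sum_E']
  funext r
  change H.SA (e s) r = _
  simp [SA, e]

theorem TL_E (s : ι) : H.TL (H.E s) = ∑ r, H.Sinv s r • H.E r := by
  rw [H.sum_E']
  funext r
  change H.SAinv (e s) r = _
  simp [SAinv, e]

theorem SL_TL (a : H.HA) : H.SL (H.TL a) = a := by
  have : H.SL ∘ₗ H.TL = LinearMap.id := by
    apply H.lin_ext
    intro i
    simp only [LinearMap.comp_apply, TL_E, map_sum, map_smul, SL_E, Finset.smul_sum, smul_smul]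
    rw [Finset.sum_comm]
    simp only [← Finset.sum_smul, H.Sinv_S]
    simp
  exact LinearMap.congr_fun this a

theorem TL_SL (a : H.HA) : H.TL (H.SL a) = a := by
  have : H.TL ∘ₗ H.SL = LinearMap.id := by
    apply H.lin_ext
    intro i
    simp only [LinearMap.comp_apply, TL_E, map_sum, map_smul, SL_E, Finset.smul_sum, smul_smul]
    rw [Finset.sum_comm]
    simp only [← Finset.sum_smul, H.S_Sinv]
    simp
  exact LinearMap.congr_fun this a

variable {M N : Type*} [AddCommGroup M] [Module k M] [AddCommGroup N] [Module k N]

/-- Sweedler sum for the coproduct of the basis vector `q`. -/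
def sw (q : ι) (B : ι → ι → M) : M := ∑ m, ∑ n, H.comul q m n • B m n

theorem sw_congr {q : ι} {B C : ι → ι → M} (h : ∀ m n, B m n = C m n) : H.sw q B = H.sw q C := by
  simp only [sw, h]

theorem map_sw (f : M →ₗ[k] N) (q : ι) (B : ι → ι → M) :
    f (H.sw q B) = H.sw q (fun m n => f (B m n)) := by
  simp [sw]

theorem sw_sum {κ : Type*} (s : Finset κ) (q : ι) (B : κ → ι → ι → M) :
    H.sw q (fun m n => ∑ i ∈ s, B i m n) = ∑ i ∈ s, H.sw q (B i) := by
  simp only [sw, Finset.smul_sum]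
  rw [Finset.sum_comm]
  conv_rhs => rw [Finset.sum_comm]
  rw [Finset.sum_comm]
  refine Finset.sum_congr rfl fun m _ => ?_
  rw [Finset.sum_comm]

theorem sw_smul (t : k) (q : ι) (B : ι → ι → M) :
    H.sw q (fun m n => t • B m n) = t • H.sw q B := by
  simp only [sw, Finset.smul_sum, smul_comm t]

theorem sw_sw_comm (p q : ι) (B : ι → ι → ι → ι → M) :
    H.sw p (fun m n => H.sw q (B m n)) = H.sw q (fun u v => H.sw p (fun m n => B m n u v)) := by
  rw [show H.sw p (fun m n => H.sw q (B m n)) =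
    H.sw p (fun m n => ∑ u, ∑ v, H.comul q u v • B m n u v) from rfl]
  simp only [sw_sum, sw_smul]
  rfl

theorem sw_coassoc (q : ι) (B : ι → ι → ι → M) :
    H.sw q (fun s c => H.sw s (fun a b => B a b c)) =
    H.sw q (fun a s => H.sw s (fun b c => B a b c)) := by
  simp only [sw, Finset.smul_sum, smul_smul]
  have h1 : (∑ s, ∑ c, ∑ a, ∑ b, (H.comul q s c * H.comul s a b) • B a b c) =
      ∑ a, ∑ b, ∑ c, (∑ s, H.comul q s c * H.comul s a b) • B a b c := by
    simp only [Finset.sum_smul]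
    simp only [← Fintype.sum_prod_type']
    exact Fintype.sum_equiv
      (⟨fun x => (x.2.2.1, x.2.2.2, x.2.1, x.1), fun y => (y.2.2.2, y.2.2.1, y.1, y.2.1),
        fun _ => rfl, fun _ => rfl⟩ : ι × ι × ι × ι ≃ ι × ι × ι × ι) _ _ fun _ => rfl
  rw [h1]
  simp only [H.coassoc, Finset.sum_smul]
  refine Finset.sum_congr rfl fun a _ => ?_
  simp only [← Fintype.sum_prod_type']
  exact Fintype.sum_equiv
    (⟨fun x => (x.2.2, x.1, x.2.1), fun y => (y.2.1, y.2.2, y.1),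
        fun _ => rfl, fun _ => rfl⟩ : ι × ι × ι ≃ ι × ι × ι) _ _ fun _ => rfl

theorem sw_counit_left (q : ι) (B : ι → M) :
    H.sw q (fun s t => H.counit s • B t) = B q := by
  simp only [sw, smul_smul]
  rw [Finset.sum_comm]
  simp only [← Finset.sum_smul, H.counit_comul]
  simp

theorem sw_counit_right (q : ι) (B : ι → M) :
    H.sw q (fun s t => H.counit t • B s) = B q := by
  simp only [sw, smul_smul]
  simp only [← Finset.sum_smul, H.comul_counit]
  simp

theorem sw_anti_left (q : ι) :
    H.sw q (fun s t => H.SL (H.E s) * H.E t) = H.counit q • (1 : H.HA) := by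
  have h : ∀ t, (∑ a, ∑ b, ∑ s, H.comul q a b * H.S a s * H.mul s b t) • H.E t =
    (H.counit q * H.one t) • H.E t := fun t => by rw [H.antipode_left]
  have h2 := Finset.sum_congr (rfl : (Finset.univ : Finset ι) = _) fun t _ => h t
  simp only [sw, SL_E, Finset.sum_mul, smul_mul_assoc, E_mul, Finset.smul_sum, smul_smul, one_E,
    ← h2, Finset.sum_smul, mul_assoc]
  simp only [← Fintype.sum_prod_type']
  exact Fintype.sum_equiv
      (⟨fun x => (x.2.2.2, x.1, x.2.1, x.2.2.1), fun y => (y.2.1, y.2.2.1, y.2.2.2, y.1),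
        fun _ => rfl, fun _ => rfl⟩ : ι × ι × ι × ι ≃ ι × ι × ι × ι) _ _ fun _ => rfl

theorem sw_anti_right (q : ι) :
    H.sw q (fun s t => H.E s * H.SL (H.E t)) = H.counit q • (1 : H.HA) := by
  have h : ∀ t, (∑ a, ∑ b, ∑ s, H.comul q a b * H.S b s * H.mul a s t) • H.E t =
    (H.counit q * H.one t) • H.E t := fun t => by rw [H.antipode_right]
  have h2 := Finset.sum_congr (rfl : (Finset.univ : Finset ι) = _) fun t _ => h t
  simp only [sw, SL_E, Finset.mul_sum, mul_smul_comm, E_mul, Finset.smul_sum, smul_smul, one_E,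
    ← h2, Finset.sum_smul, mul_assoc]
  simp only [← Fintype.sum_prod_type']
  exact Fintype.sum_equiv
      (⟨fun x => (x.2.2.2, x.1, x.2.1, x.2.2.1), fun y => (y.2.1, y.2.2.1, y.2.2.2, y.1),
        fun _ => rfl, fun _ => rfl⟩ : ι × ι × ι × ι ≃ ι × ι × ι × ι) _ _ fun _ => rfl

variable {R : Type*} [Ring R] [Algebra k R]

theorem mul_sw (x : R) (q : ι) (B : ι → ι → R) :
    x * H.sw q B = H.sw q (fun m n => x * B m n) :=
  H.map_sw (LinearMap.mulLeft k x) q B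

theorem sw_mul (x : R) (q : ι) (B : ι → ι → R) :
    H.sw q B * x = H.sw q (fun m n => B m n * x) :=
  H.map_sw (LinearMap.mulRight k x) q B

theorem comul_mul_anti (a b : ι) :
    H.sw a (fun a1 a2 => H.sw b (fun b1 b2 => H.SL (H.E a1 * H.E b1) * (H.E a2 * H.E b2))) =
      (H.counit a * H.counit b) • (1 : H.HA) := by
  rw [← H.counit_mul, Finset.sum_smul]
  simp only [mul_smul, ← H.sw_anti_left]
  have h : ∀ s t, (∑ r, H.mul a b r * H.comul r s t) • (H.SL (H.E s) * H.E t) =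
      (∑ a1, ∑ a2, ∑ b1, ∑ b2, H.comul a a1 a2 * H.comul b b1 b2 * H.mul a1 b1 s * H.mul a2 b2 t)
        • (H.SL (H.E s) * H.E t) := fun s t => by rw [H.comul_mul]
  have h2 : (∑ r, H.mul a b r • H.sw r (fun s t => H.SL (H.E s) * H.E t)) =
      ∑ s, ∑ t, (∑ r, H.mul a b r * H.comul r s t) • (H.SL (H.E s) * H.E t) := by
    simp only [sw, Finset.smul_sum, Finset.sum_smul, smul_smul]
    rw [Finset.sum_comm]
    refine Finset.sum_congr rfl fun s _ => ?_
    rw [Finset.sum_comm]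
  rw [h2]
  simp only [h]
  simp only [sw, E_mul, map_sum, map_smul, Finset.sum_mul, Finset.mul_sum, smul_mul_assoc,
    mul_smul_comm, Finset.smul_sum, Finset.sum_smul, smul_smul]
  simp only [← Fintype.sum_prod_type']
  refine Fintype.sum_equiv
      (⟨fun x => (x.2.2.2.2.2, x.2.2.2.2.1, x.1, x.2.1, x.2.2.1, x.2.2.2.1),
        fun y => (y.2.2.1, y.2.2.2.1, y.2.2.2.2.1, y.2.2.2.2.2, y.2.1, y.1),
        fun _ => rfl, fun _ => rfl⟩ : ι × ι × ι × ι × ι × ι ≃ ι × ι × ι × ι × ι × ι) _ _ fun x => ?_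
  simp only [Equiv.coe_fn_mk]
  congr 1
  ring

theorem anti_right_two (a b : ι) :
    H.sw a (fun a1 a2 => H.sw b (fun b1 b2 =>
      (H.E a1 * H.E b1) * (H.SL (H.E b2) * H.SL (H.E a2)))) =
      (H.counit a * H.counit b) • (1 : H.HA) := by
  have h : ∀ a1 a2, H.sw b (fun b1 b2 => (H.E a1 * H.E b1) * (H.SL (H.E b2) * H.SL (H.E a2))) =
      H.counit b • (H.E a1 * H.SL (H.E a2)) := by
    intro a1 a2
    have : ∀ b1 b2, (H.E a1 * H.E b1) * (H.SL (H.E b2) * H.SL (H.E a2)) =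
      H.E a1 * ((H.E b1 * H.SL (H.E b2)) * H.SL (H.E a2)) := by
      intros; simp only [_root_.mul_assoc]
    simp only [this]
    rw [← mul_sw, ← sw_mul, sw_anti_right]
    simp
  simp only [h]
  rw [sw_smul, sw_anti_right, smul_smul, mul_comm]

theorem SL_mul_E (a b : ι) : H.SL (H.E a * H.E b) = H.SL (H.E b) * H.SL (H.E a) := by
  have h1 : H.sw a (fun a1 a' => H.sw b (fun b1 b' => H.sw a' (fun a2 a3 => H.sw b' (fun b2 b3 =>
      H.SL (H.E a1 * H.E b1) * ((H.E a2 * H.E b2) * (H.SL (H.E b3) * H.SL (H.E a3)))))))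
      = H.SL (H.E a * H.E b) := by
    simp only [← mul_sw, anti_right_two]
    simp only [mul_smul_comm, _root_.mul_one, mul_smul, sw_smul, sw_counit_right]
  have h2 : H.sw a (fun a' a3 => H.sw b (fun b' b3 => H.sw a' (fun a1 a2 => H.sw b' (fun b1 b2 =>
      H.SL (H.E a1 * H.E b1) * (H.E a2 * H.E b2) * (H.SL (H.E b3) * H.SL (H.E a3))))))
      = H.SL (H.E b) * H.SL (H.E a) := by
    simp only [← sw_mul, comul_mul_anti]
    simp only [smul_mul_assoc, _root_.one_mul, mul_smul, sw_smul, sw_counit_left]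
  rw [← h1, ← h2]
  simp only [_root_.mul_assoc]
  have gen : ∀ T : ι → ι → ι → ι → ι → ι → H.HA,
      H.sw a (fun a1 a' => H.sw b (fun b1 b' => H.sw a' (fun a2 a3 => H.sw b' (fun b2 b3 =>
        T a1 b1 a2 b2 a3 b3)))) =
      H.sw a (fun a' a3 => H.sw b (fun b' b3 => H.sw a' (fun a1 a2 => H.sw b' (fun b1 b2 =>
        T a1 b1 a2 b2 a3 b3)))) := by
    intro T
    calc _ = H.sw a (fun a1 a' => H.sw a' (fun a2 a3 => H.sw b (fun b1 b' => H.sw b' (fun b2 b3 =>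
        T a1 b1 a2 b2 a3 b3)))) := H.sw_congr fun a1 a' => H.sw_sw_comm _ _ _
      _ = H.sw a (fun a1 a' => H.sw a' (fun a2 a3 => H.sw b (fun b' b3 => H.sw b' (fun b1 b2 =>
        T a1 b1 a2 b2 a3 b3)))) := H.sw_congr fun a1 a' => H.sw_congr fun a2 a3 =>
          (H.sw_coassoc _ _).symm
      _ = H.sw a (fun a' a3 => H.sw a' (fun a1 a2 => H.sw b (fun b' b3 => H.sw b' (fun b1 b2 =>
        T a1 b1 a2 b2 a3 b3)))) := (H.sw_coassoc _ _).symm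
      _ = _ := H.sw_congr fun a1 a' => H.sw_sw_comm _ _ _
  exact gen _

theorem SL_mul (a b : H.HA) : H.SL (a * b) = H.SL b * H.SL a := by
  rw [H.sum_E a, H.sum_E b]
  simp only [Finset.sum_mul, Finset.mul_sum, map_sum, smul_mul_assoc, mul_smul_comm, map_smul,
    SL_mul_E, Finset.smul_sum, smul_smul]
  refine Finset.sum_comm.trans ?_
  simp only [mul_comm]

theorem SL_one : H.SL 1 = 1 := by
  have h : (∑ r, H.one r • H.sw r (fun s t => H.SL (H.E s) * H.E t)) = H.SL 1 * 1 := by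
    simp only [sw, Finset.smul_sum, smul_smul]
    rw [Finset.sum_comm]
    have : ∀ s, (∑ r, ∑ t, (H.one r * H.comul r s t) • (H.SL (H.E s) * H.E t)) =
        ∑ t, (H.one s * H.one t) • (H.SL (H.E s) * H.E t) := by
      intro s
      rw [Finset.sum_comm]
      simp only [← Finset.sum_smul, H.comul_one]
    simp only [this]
    rw [one_E]
    simp only [map_sum, map_smul, Finset.sum_mul, Finset.mul_sum, smul_mul_assoc, mul_smul_comm,
      Finset.smul_sum, smul_smul]
    rw [Finset.sum_comm]
    simp only [mul_comm]
  simp only [sw_anti_left, smul_smul, ← Finset.sum_smul, H.counit_one] at h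
  simpa using h.symm

theorem sw_anti_inv (q : ι) :
    H.sw q (fun s t => H.E t * H.TL (H.E s)) = H.counit q • (1 : H.HA) := by
  have h : H.SL (H.sw q (fun s t => H.E t * H.TL (H.E s))) = H.SL (H.counit q • (1 : H.HA)) := by
    rw [map_sw]
    simp only [SL_mul, SL_TL, sw_anti_right, map_smul, SL_one]
  rw [← H.TL_SL (H.sw q _), h, TL_SL]

theorem sw_anti_left_map (F : H.HA →ₗ[k] M) (q : ι) :
    H.sw q (fun s t => F (H.SL (H.E s) * H.E t)) = H.counit q • F 1 := by
  rw [← map_sw, sw_anti_left, map_smul]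

theorem sw_anti_right_map (F : H.HA →ₗ[k] M) (q : ι) :
    H.sw q (fun s t => F (H.E s * H.SL (H.E t))) = H.counit q • F 1 := by
  rw [← map_sw, sw_anti_right, map_smul]

theorem sw_anti_inv_map (F : H.HA →ₗ[k] M) (q : ι) :
    H.sw q (fun s t => F (H.E t * H.TL (H.E s))) = H.counit q • F 1 := by
  rw [← map_sw, sw_anti_inv, map_smul]

theorem sum_rtri (F : H.HA →ₗ[k] R) (jX : (ι → k) →ₗ[k] R) (a : ι) :
    (∑ d, F (H.E d) * jX (H.rtri a d)) =
      H.sw a (fun m n => ∑ t, F (H.TL (H.E n) * H.E t * H.E m) * jX (e t)) := by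
  have h : ∀ d, jX (H.rtri a d) = ∑ t, H.rtri a d t • jX (e t) := by
    intro d
    have := congrArg (fun v : H.HA => jX v) (H.sum_E (H.rtri a d))
    refine this.trans ?_
    exact (map_sum jX _ _).trans (Finset.sum_congr rfl fun t _ => map_smul jX _ _)
  simp only [h, rtri, sw, TL_E, Finset.sum_mul, E_mul, map_sum, map_smul, smul_mul_assoc,
    Finset.mul_sum, mul_smul_comm, Finset.smul_sum, Finset.sum_smul, smul_smul]
  simp only [← Fintype.sum_prod_type']
  refine Fintype.sum_equiv
      (⟨fun x => (x.2.2.1, x.2.2.2.1, x.2.1, x.2.2.2.2.2, x.2.2.2.2.1, x.1),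
        fun y => (y.2.2.2.2.2, y.2.2.1, y.1, y.2.1, y.2.2.2.2.1, y.2.2.2.1),
        fun _ => rfl, fun _ => rfl⟩ : ι × ι × ι × ι × ι × ι ≃ ι × ι × ι × ι × ι × ι) _ _ fun x => ?_
  simp only [Equiv.coe_fn_mk]
  congr 1
  ring

theorem sum_ltri (G : H.HA →ₗ[k] R) (jA : H.HA →ₗ[k] R) (b : ι) :
    (∑ c, G (H.E c) * jA (H.ltri b c)) =
      H.sw b (fun g b2 => H.sw b2 (fun p r => G (H.TL (H.E r) * H.E g) * jA (H.E p))) := by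
  have h : ∀ d, jA (H.ltri b d) = ∑ t, H.ltri b d t • jA (H.E t) := by
    intro d
    have := congrArg jA (H.sum_E (H.ltri b d))
    refine this.trans ?_
    exact (map_sum jA _ _).trans (Finset.sum_congr rfl fun t _ => map_smul jA _ _)
  simp only [h, ltri, sw, TL_E, Finset.sum_mul, E_mul, map_sum, map_smul, smul_mul_assoc,
    Finset.mul_sum, mul_smul_comm, Finset.smul_sum, Finset.sum_smul, smul_smul]
  simp only [← Fintype.sum_prod_type']
  refine Fintype.sum_equiv
      (⟨fun x => (x.2.2.2.1, x.2.2.2.2.1, x.2.1, x.2.2.2.2.2, x.2.2.1, x.1),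
        fun y => (y.2.2.2.2.2, y.2.2.1, y.2.2.2.2.1, y.1, y.2.1, y.2.2.2.1),
        fun _ => rfl, fun _ => rfl⟩ : ι × ι × ι × ι × ι × ι ≃ ι × ι × ι × ι × ι × ι) _ _ fun x => ?_
  simp only [Equiv.coe_fn_mk]
  congr 1
  ring

/-- Step one: straightening `a x` with a linear functional applied to the dual index. -/
theorem cross_one (jX : (ι → k) →ₗ[k] R) (J : H.HA →ₗ[k] R)
    (hcross : ∀ q r, J (H.E q) * jX (e r) =
      ∑ a, ∑ b, ∑ c, ∑ d, (H.comul q a b * H.mul c d r) •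
        (jX (H.rtri a d) * J (H.ltri b c))) (P : H.HA →ₗ[k] R) (q : ι) :
    (∑ r, P (H.E r) * (J (H.E q) * jX (e r))) =
      H.sw q (fun a b => H.sw a (fun m n => ∑ t, H.sw b (fun g b2 => H.sw b2 (fun p r =>
        P (H.TL (H.E r) * H.E g * (H.TL (H.E n) * H.E t * H.E m)) * jX (e t) * J (H.E p))))) := by
  have h1 : ∀ r, J (H.E q) * jX (e r) = H.sw q (fun a b => ∑ c, ∑ d, H.mul c d r •
        (jX (H.rtri a d) * J (H.ltri b c))) := by
    intro r
    rw [hcross]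
    simp only [sw, Finset.smul_sum, smul_smul]
  simp only [h1, mul_sw]
  rw [← sw_sum]
  refine H.sw_congr fun a b => ?_
  have h2 : (∑ r, P (H.E r) * ∑ c, ∑ d, H.mul c d r • (jX (H.rtri a d) * J (H.ltri b c))) =
      ∑ c, (∑ d, P (H.E c * H.E d) * jX (H.rtri a d)) * J (H.ltri b c) := by
    simp only [Finset.mul_sum, E_mul, map_sum, map_smul, Finset.sum_mul, mul_smul_comm,
      smul_mul_assoc, _root_.mul_assoc]
    rw [Finset.sum_comm]
    refine Finset.sum_congr rfl fun c _ => ?_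
    rw [Finset.sum_comm]
  rw [h2]
  have h3 : ∀ c, (∑ d, P (H.E c * H.E d) * jX (H.rtri a d)) =
      H.sw a (fun m n => ∑ t, P (H.E c * (H.TL (H.E n) * H.E t * H.E m)) * jX (e t)) := fun c =>
    H.sum_rtri (P ∘ₗ LinearMap.mulLeft k (H.E c)) jX a
  simp only [h3, sw_mul]
  rw [← sw_sum]
  refine H.sw_congr fun m n => ?_
  simp only [Finset.sum_mul]
  rw [Finset.sum_comm]
  refine Finset.sum_congr rfl fun t _ => ?_
  exact H.sum_ltri (LinearMap.mulRight k (jX (e t)) ∘ₗ P ∘ₗ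
    LinearMap.mulRight k (H.TL (H.E n) * H.E t * H.E m)) J b

/-- Step two: the simplified straightening rule. -/
theorem cross_two (jX : (ι → k) →ₗ[k] R) (J : H.HA →ₗ[k] R)
    (hcross : ∀ q r, J (H.E q) * jX (e r) =
      ∑ a, ∑ b, ∑ c, ∑ d, (H.comul q a b * H.mul c d r) •
        (jX (H.rtri a d) * J (H.ltri b c))) (P : H.HA →ₗ[k] R) (q : ι) :
    (∑ r, P (H.E r) * (J (H.E q) * jX (e r))) =
      ∑ t, H.sw q (fun m c => H.sw c (fun p r =>
        P (H.TL (H.E r) * H.E t * H.E m) * jX (e t) * J (H.E p))) := by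
  rw [H.cross_one jX J hcross]
  simp only [sw_sum]
  refine Finset.sum_congr rfl fun t _ => ?_
  rw [H.sw_coassoc q (fun m n b => H.sw b (fun g b2 => H.sw b2 (fun p r =>
        P (H.TL (H.E r) * H.E g * (H.TL (H.E n) * H.E t * H.E m)) * jX (e t) * J (H.E p))))]
  refine H.sw_congr fun m c => ?_
  rw [← H.sw_coassoc c (fun n g b2 => H.sw b2 (fun p r =>
        P (H.TL (H.E r) * H.E g * (H.TL (H.E n) * H.E t * H.E m)) * jX (e t) * J (H.E p)))]
  have h : ∀ s b2, H.sw s (fun n g => H.sw b2 (fun p r =>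
        P (H.TL (H.E r) * H.E g * (H.TL (H.E n) * H.E t * H.E m)) * jX (e t) * J (H.E p))) =
      H.counit s • H.sw b2 (fun p r =>
        P (H.TL (H.E r) * H.E t * H.E m) * jX (e t) * J (H.E p)) := by
    intro s b2
    rw [sw_sw_comm, ← sw_smul]
    refine H.sw_congr fun p r => ?_
    have := H.sw_anti_inv_map (LinearMap.mulRight k (J (H.E p)) ∘ₗ LinearMap.mulRight k (jX (e t)) ∘ₗ
      P ∘ₗ LinearMap.mulLeft k (H.TL (H.E r)) ∘ₗ LinearMap.mulRight k (H.E t * H.E m)) s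
    simpa only [LinearMap.comp_apply, LinearMap.mulRight_apply, LinearMap.mulLeft_apply,
      _root_.mul_assoc, _root_.one_mul] using this
  simp only [h]
  rw [sw_counit_left]

/-- `Δ(a) R = R Δ^op(a)`. -/
theorem cross_three (jX : (ι → k) →ₗ[k] R) (J : H.HA →ₗ[k] R)
    (hcross : ∀ q r, J (H.E q) * jX (e r) =
      ∑ a, ∑ b, ∑ c, ∑ d, (H.comul q a b * H.mul c d r) •
        (jX (H.rtri a d) * J (H.ltri b c))) (P : H.HA →ₗ[k] R) (q : ι) :
    (∑ t, H.sw q (fun m n => P (H.E n * H.E t) * (J (H.E m) * jX (e t)))) =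
      ∑ t, H.sw q (fun m n => P (H.E t * H.E m) * (jX (e t) * J (H.E n))) := by
  rw [← sw_sum]
  have h := fun n m => H.cross_two jX J hcross (P ∘ₗ LinearMap.mulLeft k (H.E n)) m
  simp only [LinearMap.comp_apply, LinearMap.mulLeft_apply] at h
  simp only [h]
  rw [sw_sum]
  refine Finset.sum_congr rfl fun t _ => ?_
  rw [H.sw_coassoc q (fun m c n => H.sw c (fun p r =>
    P (H.E n * (H.TL (H.E r) * H.E t * H.E m)) * jX (e t) * J (H.E p)))]
  refine H.sw_congr fun m c' => ?_
  rw [H.sw_coassoc c' (fun p r n =>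
    P (H.E n * (H.TL (H.E r) * H.E t * H.E m)) * jX (e t) * J (H.E p))]
  have h2 : ∀ p s, H.sw s (fun r n =>
      P (H.E n * (H.TL (H.E r) * H.E t * H.E m)) * jX (e t) * J (H.E p)) =
      H.counit s • (P (H.E t * H.E m) * (jX (e t) * J (H.E p))) := by
    intro p s
    have := H.sw_anti_inv_map (LinearMap.mulRight k (J (H.E p)) ∘ₗ LinearMap.mulRight k (jX (e t)) ∘ₗ
      P ∘ₗ LinearMap.mulRight k (H.E t * H.E m)) s
    simpa only [LinearMap.comp_apply, LinearMap.mulRight_apply, LinearMap.mulLeft_apply,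
      _root_.mul_assoc, _root_.one_mul] using this
  simp only [h2]
  rw [sw_counit_right]

/-- `d₀ a = S²(a) d₀`. -/
theorem d_comm (jX : (ι → k) →ₗ[k] R) (J : H.HA →ₗ[k] R)
    (hJ : ∀ a b, J (a * b) = J a * J b) (hJ1 : J 1 = 1)
    (hcross : ∀ q r, J (H.E q) * jX (e r) =
      ∑ a, ∑ b, ∑ c, ∑ d, (H.comul q a b * H.mul c d r) •
        (jX (H.rtri a d) * J (H.ltri b c))) (q : ι) :
    (∑ t, J (H.SL (H.SL (H.E t))) * jX (e t)) * J (H.E q) =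
      J (H.SL (H.SL (H.E q))) * ∑ t, J (H.SL (H.SL (H.E t))) * jX (e t) := by
  have key : H.sw q (fun b c => ∑ t, H.sw c (fun m n =>
        J (H.SL (H.SL (H.E n * H.E t))) * J (H.SL (H.E b)) * (J (H.E m) * jX (e t)))) =
      H.sw q (fun b c => ∑ t, H.sw c (fun m n =>
        J (H.SL (H.SL (H.E t * H.E m))) * J (H.SL (H.E b)) * (jX (e t) * J (H.E n)))) :=
    H.sw_congr fun b c => H.cross_three jX J hcross
      (LinearMap.mulRight k (J (H.SL (H.E b))) ∘ₗ J ∘ₗ H.SL ∘ₗ H.SL) c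
  rw [sw_sum, sw_sum] at key
  have hl : ∀ t, H.sw q (fun b c => H.sw c (fun m n =>
        J (H.SL (H.SL (H.E n * H.E t))) * J (H.SL (H.E b)) * (J (H.E m) * jX (e t)))) =
      J (H.SL (H.SL (H.E q))) * (J (H.SL (H.SL (H.E t))) * jX (e t)) := by
    intro t
    rw [← H.sw_coassoc q (fun b m n =>
        J (H.SL (H.SL (H.E n * H.E t))) * J (H.SL (H.E b)) * (J (H.E m) * jX (e t)))]
    have h2 : ∀ s n, H.sw s (fun b m =>
        J (H.SL (H.SL (H.E n * H.E t))) * J (H.SL (H.E b)) * (J (H.E m) * jX (e t))) =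
        H.counit s • (J (H.SL (H.SL (H.E n))) * (J (H.SL (H.SL (H.E t))) * jX (e t))) := by
      intro s n
      have := H.sw_anti_left_map (LinearMap.mulLeft k (J (H.SL (H.SL (H.E n * H.E t)))) ∘ₗ
        LinearMap.mulRight k (jX (e t)) ∘ₗ J) s
      simpa only [LinearMap.comp_apply, LinearMap.mulRight_apply, LinearMap.mulLeft_apply,
        _root_.mul_assoc, _root_.one_mul, SL_mul, hJ, hJ1] using this
    simp only [h2]
    rw [sw_counit_left]
  have hr : ∀ t, H.sw q (fun b c => H.sw c (fun m n =>
        J (H.SL (H.SL (H.E t * H.E m))) * J (H.SL (H.E b)) * (jX (e t) * J (H.E n)))) =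
      (J (H.SL (H.SL (H.E t))) * jX (e t)) * J (H.E q) := by
    intro t
    rw [← H.sw_coassoc q (fun b m n =>
        J (H.SL (H.SL (H.E t * H.E m))) * J (H.SL (H.E b)) * (jX (e t) * J (H.E n)))]
    have h2 : ∀ s n, H.sw s (fun b m =>
        J (H.SL (H.SL (H.E t * H.E m))) * J (H.SL (H.E b)) * (jX (e t) * J (H.E n))) =
        H.counit s • ((J (H.SL (H.SL (H.E t))) * jX (e t)) * J (H.E n)) := by
      intro s n
      have := H.sw_anti_right_map (LinearMap.mulLeft k (J (H.SL (H.SL (H.E t)))) ∘ₗ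
        LinearMap.mulRight k (jX (e t) * J (H.E n)) ∘ₗ J ∘ₗ H.SL) s
      simpa only [LinearMap.comp_apply, LinearMap.mulRight_apply, LinearMap.mulLeft_apply,
        _root_.mul_assoc, _root_.one_mul, SL_mul, hJ, hJ1, SL_one] using this
    simp only [h2]
    rw [sw_counit_left]
  simp only [hl, hr] at key
  rw [Finset.sum_mul, Finset.mul_sum]
  exact key.symm

theorem d_mul (jX : (ι → k) →ₗ[k] R) (J : H.HA →ₗ[k] R)
    (hJ : ∀ a b, J (a * b) = J a * J b) (hJ1 : J 1 = 1)
    (hX : ∀ x y, jX (H.mulX x y) = jX x * jX y) (hX1 : jX H.oneX = 1)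
    (hcross : ∀ q r, J (H.E q) * jX (e r) =
      ∑ a, ∑ b, ∑ c, ∑ d, (H.comul q a b * H.mul c d r) •
        (jX (H.rtri a d) * J (H.ltri b c))) :
    (∑ t, J (H.SL (H.SL (H.E t))) * jX (e t)) * (∑ t, J (H.TL (H.E t)) * jX (e t)) = 1 := by
  set d := ∑ t, J (H.SL (H.SL (H.E t))) * jX (e t) with hd
  have hsum : ∀ f : ι → k, jX f = ∑ t, f t • jX (e t) := by
    intro f
    have := congrArg (fun v : H.HA => jX v) (H.sum_E f)
    refine this.trans ?_
    exact (map_sum jX _ _).trans (Finset.sum_congr rfl fun t _ => map_smul jX _ _)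
  have hc : ∀ a, d * J a = J (H.SL (H.SL a)) * d := by
    intro a
    have : LinearMap.mulLeft k d ∘ₗ J = LinearMap.mulRight k d ∘ₗ J ∘ₗ H.SL ∘ₗ H.SL :=
      H.lin_ext fun i => H.d_comm jX J hJ hJ1 hcross i
    exact LinearMap.congr_fun this a
  have hXX : ∀ t s, jX (e t) * jX (e s) = ∑ r, H.comul r t s • jX (e r) := by
    intro t s
    rw [← hX, hsum]
    refine Finset.sum_congr rfl fun r _ => ?_
    simp [mulX, e]
  rw [Finset.mul_sum]
  simp only [← _root_.mul_assoc, hc, SL_TL]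
  simp only [hd, Finset.mul_sum, Finset.sum_mul]
  have h1 : ∀ s t, J (H.SL (H.E s)) * (J (H.SL (H.SL (H.E t))) * jX (e t)) * jX (e s) =
      ∑ r, H.comul r t s • (J (H.SL (H.SL (H.E t) * H.E s)) * jX (e r)) := by
    intro s t
    rw [SL_mul, hJ, _root_.mul_assoc, _root_.mul_assoc, hXX]
    simp only [Finset.mul_sum, mul_smul_comm, _root_.mul_assoc]
  simp only [h1]
  have h2 : (∑ s, ∑ t, ∑ r, H.comul r t s • (J (H.SL (H.SL (H.E t) * H.E s)) * jX (e r))) =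
      ∑ r, H.sw r (fun t s => J (H.SL (H.SL (H.E t) * H.E s)) * jX (e r)) := by
    simp only [sw]
    rw [Finset.sum_comm]
    conv_rhs => rw [Finset.sum_comm]
    refine Finset.sum_congr rfl fun t _ => ?_
    rw [Finset.sum_comm]
  rw [h2]
  have h3 : ∀ r, H.sw r (fun t s => J (H.SL (H.SL (H.E t) * H.E s)) * jX (e r)) =
      H.counit r • jX (e r) := by
    intro r
    have := H.sw_anti_left_map (LinearMap.mulRight k (jX (e r)) ∘ₗ J ∘ₗ H.SL) r
    simpa only [LinearMap.comp_apply, LinearMap.mulRight_apply, SL_one, hJ1,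
      _root_.one_mul] using this
  simp only [h3]
  rw [← hX1, hsum]
  rfl

end aux
end FinHopfSC


open FinHopfSC in
/-- in the Drinfeld double `D(A)` of a finite-dimensional Hopf
algebra `A`, the element `d₀ = ∑ t, S²(a_t) x_t` is invertible with inverse
`∑ t, S⁻¹(a_t) x_t`.  Here the Drinfeld double is presented as an algebra `D`
together with algebra embeddings `jX` of `A*` and `jA` of `A` such that
`x ⊗ a ↦ jX x * jA a` is a linear isomorphism onto `D` and the double
cross-product relation
`a x = ∑ (a₍₁₎ ▷ x₍₂₎)(a₍₂₎ ◁ x₍₁₎)` holds. -/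
theorem stmt4 (k : Type*) [Field k] (ι : Type*) [Fintype ι] [DecidableEq ι]
    (H : FinHopfSC k ι)
    (D : Type*) [Ring D] [Algebra k D] (jX jA : (ι → k) →ₗ[k] D)
    (hA : ∀ a b, jA (H.mulA a b) = jA a * jA b) (hA1 : jA H.oneA = 1)
    (hX : ∀ x y, jX (H.mulX x y) = jX x * jX y) (hX1 : jX H.oneX = 1)
    (hbij : Function.Bijective
      (fun c : ι → ι → k => ∑ p, ∑ q, c p q • (jX (e p) * jA (e q))))
    (hcross : ∀ q r, jA (e q) * jX (e r) =
      ∑ a, ∑ b, ∑ c, ∑ d, (H.comul q a b * H.mul c d r) •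
        (jX (H.rtri a d) * jA (H.ltri b c))) :
    (∑ t, jA (H.SA (H.SA (e t))) * jX (e t)) * (∑ t, jA (H.SAinv (e t)) * jX (e t)) = 1 ∧
    (∑ t, jA (H.SAinv (e t)) * jX (e t)) * (∑ t, jA (H.SA (H.SA (e t))) * jX (e t)) = 1 := by
  have hfin : Module.Finite k D := by
    let L : (ι → ι → k) →ₗ[k] D :=
      { toFun := fun c => ∑ p, ∑ q, c p q • (jX (e p) * jA (e q))
        map_add' := fun a b => by simp [add_smul, Finset.sum_add_distrib]
        map_smul' := fun a b => by simp [mul_smul, Finset.smul_sum] }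
    exact Module.Finite.of_surjective L hbij.surjective
  let J : H.HA →ₗ[k] D :=
    { toFun := fun a => jA a
      map_add' := fun a b => map_add jA a b
      map_smul' := fun t a => map_smul jA t a }
  have h := H.d_mul jX J hA hA1 hX hX1 hcross
  have h' : (∑ t, jA (H.SA (H.SA (e t))) * jX (e t)) *
    (∑ t, jA (H.SAinv (e t)) * jX (e t)) = 1 := h
  refine ⟨h', ?_⟩
  have : IsNoetherianRing D := isNoetherian_of_tower k inferInstance
  exact mul_eq_one_symm h'
end

section
/- Let A be a finite-dimensional Hopf algebra and let H = A* # A be the Heisenberg double (smash product of A* with A under the left regular action a ⇀ x = x₍₁₎⟨x₍₂₎, a⟩). Define α : A* → H, α(x) = x # 1, and β : A* → H, β(x) = Σ_t ad_{x_t}(x) # a_t = Σ_t (x_t)₍₂₎ x S⁻¹((x_t)₍₁₎) # a_t, where {a_t} is a basis of A with dual basis {x_t}. Then for all x, y ∈ A*, α(x)β(y) = β(y)α(x) in H. -/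
namespace FinHopfSC

variable {k : Type*} [Field k] {ι : Type*} [Fintype ι] [DecidableEq ι]
variable (H : FinHopfSC k ι)

/-- the multiplication of the Heisenberg double `H(A*) = A* # A`
(the smash product of `A*` with `A` for the left regular action):
`(x # a)(y # b) = x (a₍₁₎ ⇀ y) # a₍₂₎ b`.  An element of the Heisenberg double
is recorded by its coefficient matrix `c`, where `c p q` is the coefficient of
the basis element `x_p # a_q`. -/
def smashMul (c d : ι → ι → k) : ι → ι → k := fun u v =>
  ∑ p, ∑ q, ∑ r, ∑ s, ∑ a, ∑ b, c p q * d r s * H.comul q a b *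
    (H.mulX (e p) (H.hit (e a) (e r))) u * (H.mulA (e b) (e s)) v

/-- the identity element `1 # 1` of the Heisenberg double. -/
def smashOne : ι → ι → k := fun u v => H.counit u * H.one v

/-- the source map `α : A* → A* # A`, `x ↦ x # 1`. -/
def alphaH (x : ι → k) : ι → ι → k := fun u v => x u * H.one v

/-- the target map `β : A* → A* # A`, `x ↦ ∑ t, ad_{x_t} x # a_t`. -/
def betaH (x : ι → k) : ι → ι → k := fun u v => H.adX (e v) x u

end FinHopfSC

namespace FinHopfSC

section helpers

variable {k : Type*} [Field k] {ι : Type*} [Fintype ι] [DecidableEq ι]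

/-- Weighted sum over one index. -/
def L1 (w : ι → k) (f : ι → k) : k := ∑ i, w i * f i

/-- Weighted sum over two indices. -/
def L2 (w : ι → ι → k) (f : ι → ι → k) : k := ∑ i, ∑ j, w i j * f i j

theorem c1 {w f g : ι → k} (h : ∀ i, f i = g i) : L1 w f = L1 w g := by
  rw [funext h]

theorem c2 {w f g : ι → ι → k} (h : ∀ i j, f i j = g i j) : L2 w f = L2 w g := by
  rw [show f = g from funext fun i => funext fun j => h i j]

theorem L11 (w v : ι → k) (f : ι → ι → k) :
    L1 w (fun i => L1 v (fun j => f i j)) = L1 v (fun j => L1 w (fun i => f i j)) := by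
  simp only [L1, Finset.mul_sum]
  rw [Finset.sum_comm]
  exact Finset.sum_congr rfl fun _ _ => Finset.sum_congr rfl fun _ _ => by ring

theorem L1m (w f : ι → k) (c : k) : L1 w (fun i => c * f i) = c * L1 w f := by
  simp only [L1, Finset.mul_sum]
  exact Finset.sum_congr rfl fun _ _ => by ring

theorem L2m (w f : ι → ι → k) (c : k) : L2 w (fun i j => c * f i j) = c * L2 w f := by
  simp only [L2, Finset.mul_sum]
  exact Finset.sum_congr rfl fun _ _ => Finset.sum_congr rfl fun _ _ => by ring

theorem L1m' (w f : ι → k) (c : k) : L1 w (fun i => f i * c) = L1 w f * c := by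
  simp only [L1, Finset.sum_mul]
  exact Finset.sum_congr rfl fun _ _ => by ring

theorem L1s (w : ι → k) (f : ι → ι → k) :
    L1 w (fun i => ∑ j, f i j) = ∑ j, L1 w (fun i => f i j) := by
  simp only [L1, Finset.mul_sum]
  exact Finset.sum_comm

theorem L2s (w : ι → ι → k) (f : ι → ι → ι → k) :
    L2 w (fun i i' => ∑ j, f i i' j) = ∑ j, L2 w (fun i i' => f i i' j) := by
  simp only [L2, Finset.mul_sum]
  rw [Finset.sum_comm]
  rw [Finset.sum_comm' (t' := Finset.univ) (s' := fun _ => Finset.univ) (by simp)]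
  rw [Finset.sum_comm]
  refine (Finset.sum_congr rfl fun _ _ => Finset.sum_comm).trans ?_
  rw [Finset.sum_comm]
  exact Finset.sum_congr rfl fun _ _ => Finset.sum_comm

theorem L21 (w : ι → ι → k) (v : ι → k) (f : ι → ι → ι → k) :
    L2 w (fun i i' => L1 v (fun j => f i i' j)) = L1 v (fun j => L2 w (fun i i' => f i i' j)) := by
  simp only [L1]
  rw [L2s]
  simp only [L2m]

theorem L22 (w v : ι → ι → k) (f : ι → ι → ι → ι → k) :
    L2 w (fun i i' => L2 v (fun j j' => f i i' j j'))
      = L2 v (fun j j' => L2 w (fun i i' => f i i' j j')) := by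
  conv_lhs => simp only [L2.eq_1 v]
  simp only [L2s, L2m]
  rfl

/-- evaluation at a basis vector -/
theorem ev1 (w f : ι → k) : L1 w f = ∑ j, f j * L1 w (fun i => if i = j then 1 else 0) := by
  simp [L1, mul_comm]

variable (H : FinHopfSC k ι)

theorem coassoc' (r : ι) (f : ι → ι → ι → k) :
    L2 (H.comul r) (fun s c => L2 (H.comul s) (fun a b => f a b c))
      = L2 (H.comul r) (fun a s => L2 (H.comul s) (fun b c => f a b c)) := by
  have h1 : L2 (H.comul r) (fun s c => L2 (H.comul s) (fun a b => f a b c))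
      = ∑ a, ∑ b, ∑ c, (∑ s, H.comul r s c * H.comul s a b) * f a b c := by
    rw [L2, Finset.sum_comm]
    simp only [L2, Finset.mul_sum, Finset.sum_mul]
    rw [Finset.sum_congr rfl fun c _ => Finset.sum_comm]
    rw [Finset.sum_comm]
    refine Finset.sum_congr rfl fun a _ => ?_
    rw [Finset.sum_congr rfl fun c _ => Finset.sum_comm]
    rw [Finset.sum_comm]
    refine Finset.sum_congr rfl fun b _ => ?_
    exact Finset.sum_congr rfl fun _ _ => Finset.sum_congr rfl fun _ _ => by ring
  have h2 : L2 (H.comul r) (fun a s => L2 (H.comul s) (fun b c => f a b c))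
      = ∑ a, ∑ b, ∑ c, (∑ s, H.comul r a s * H.comul s b c) * f a b c := by
    simp only [L2, Finset.mul_sum, Finset.sum_mul]
    refine Finset.sum_congr rfl fun a _ => ?_
    rw [Finset.sum_comm]
    refine Finset.sum_congr rfl fun b _ => ?_
    rw [Finset.sum_comm]
    exact Finset.sum_congr rfl fun _ _ => Finset.sum_congr rfl fun _ _ => by ring
  rw [h1, h2]
  simp only [H.coassoc]

theorem assoc' (a b c : ι) (f : ι → k) :
    L1 (H.mul a b) (fun s => L1 (H.mul s c) f) = L1 (H.mul b c) (fun s => L1 (H.mul a s) f) := by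
  have h := H.assoc a b c
  simp only [L1, Finset.mul_sum, ← mul_assoc]
  rw [Finset.sum_comm]
  conv_rhs => rw [Finset.sum_comm]
  simp only [← Finset.sum_mul, h]

theorem one_mul' (b : ι) (f : ι → k) : L1 H.one (fun s => L1 (H.mul s b) f) = f b := by
  have h := H.one_mul b
  simp only [L1, Finset.mul_sum, ← mul_assoc]
  rw [Finset.sum_comm]
  simp only [← Finset.sum_mul, h]
  simp

theorem mul_one' (b : ι) (f : ι → k) : L1 H.one (fun s => L1 (H.mul b s) f) = f b := by
  have h := H.mul_one b
  simp only [L1, Finset.mul_sum, ← mul_assoc]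
  rw [Finset.sum_comm]
  simp only [← Finset.sum_mul, h]
  simp

theorem counit_comul' (r : ι) (f : ι → k) :
    L2 (H.comul r) (fun s t => H.counit s * f t) = f r := by
  have h := H.counit_comul r
  simp only [L2, ← mul_assoc]
  rw [Finset.sum_comm]
  simp only [← Finset.sum_mul, h]
  simp

theorem comul_counit' (r : ι) (f : ι → k) :
    L2 (H.comul r) (fun s t => H.counit t * f s) = f r := by
  have h := H.comul_counit r
  simp only [L2, ← mul_assoc]
  simp only [← Finset.sum_mul, h]
  simp

theorem counit_mul' (a b : ι) : L1 (H.mul a b) H.counit = H.counit a * H.counit b :=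
  H.counit_mul a b

theorem counit_one' : L1 H.one H.counit = 1 := H.counit_one

theorem comul_one' (f : ι → ι → k) :
    L1 H.one (fun r => L2 (H.comul r) f) = L1 H.one (fun s => L1 H.one (fun t => f s t)) := by
  have h := H.comul_one
  simp only [L1, L2, Finset.mul_sum, ← mul_assoc]
  rw [Finset.sum_comm]
  refine Finset.sum_congr rfl fun a _ => ?_
  rw [Finset.sum_comm]
  simp only [← Finset.sum_mul, h]

theorem S_Sinv' (a : ι) (f : ι → k) : L1 (H.S a) (fun s => L1 (H.Sinv s) f) = f a := by
  have h := H.S_Sinv a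
  simp only [L1, Finset.mul_sum, ← mul_assoc]
  rw [Finset.sum_comm]
  simp only [← Finset.sum_mul, h]
  simp

theorem Sinv_S' (a : ι) (f : ι → k) : L1 (H.Sinv a) (fun s => L1 (H.S s) f) = f a := by
  have h := H.Sinv_S a
  simp only [L1, Finset.mul_sum, ← mul_assoc]
  rw [Finset.sum_comm]
  simp only [← Finset.sum_mul, h]
  simp

/-- pull a sum with coefficients out to evaluate at basis vectors -/
theorem ev_e (w f : ι → k) : L1 w f = ∑ j, w j * f j := rfl

theorem antipode_left' (r : ι) (f : ι → k) :
    L2 (H.comul r) (fun a b => L1 (H.S a) (fun s => L1 (H.mul s b) f))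
      = H.counit r * L1 H.one f := by
  have h := H.antipode_left r
  have : ∀ a b, L1 (H.S a) (fun s => L1 (H.mul s b) f)
      = ∑ t, f t * ∑ s, H.S a s * H.mul s b t := by
    intro a b
    simp only [L1, Finset.mul_sum]
    rw [Finset.sum_comm]
    exact Finset.sum_congr rfl fun _ _ => Finset.sum_congr rfl fun _ _ => by ring
  simp only [this]
  rw [L2s]
  simp only [L2m, L2, L1, Finset.mul_sum, ← mul_assoc] at h ⊢
  refine Finset.sum_congr rfl fun t _ => ?_
  rw [← h t]
  simp only [Finset.sum_mul]
  exact Finset.sum_congr rfl fun _ _ => Finset.sum_congr rfl fun _ _ =>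
    Finset.sum_congr rfl fun _ _ => by ring

theorem antipode_right' (r : ι) (f : ι → k) :
    L2 (H.comul r) (fun a b => L1 (H.S b) (fun s => L1 (H.mul a s) f))
      = H.counit r * L1 H.one f := by
  have h := H.antipode_right r
  have : ∀ a b, L1 (H.S b) (fun s => L1 (H.mul a s) f)
      = ∑ t, f t * ∑ s, H.S b s * H.mul a s t := by
    intro a b
    simp only [L1, Finset.mul_sum]
    rw [Finset.sum_comm]
    exact Finset.sum_congr rfl fun _ _ => Finset.sum_congr rfl fun _ _ => by ring
  simp only [this]
  rw [L2s]
  simp only [L2m, L2, L1, Finset.mul_sum, ← mul_assoc] at h ⊢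
  refine Finset.sum_congr rfl fun t _ => ?_
  rw [← h t]
  simp only [Finset.sum_mul]
  exact Finset.sum_congr rfl fun _ _ => Finset.sum_congr rfl fun _ _ =>
    Finset.sum_congr rfl fun _ _ => by ring

theorem comul_mul' (a b : ι) (f : ι → ι → k) :
    L1 (H.mul a b) (fun r => L2 (H.comul r) f)
      = L2 (H.comul a) (fun a1 a2 => L2 (H.comul b) (fun b1 b2 =>
          L1 (H.mul a1 b1) (fun s => L1 (H.mul a2 b2) (fun t => f s t)))) := by
  have h := H.comul_mul a b
  have h1 : L1 (H.mul a b) (fun r => L2 (H.comul r) f)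
      = ∑ s, ∑ t, f s t * ∑ r, H.mul a b r * H.comul r s t := by
    simp only [L2, L1s]
    refine Finset.sum_congr rfl fun s _ => Finset.sum_congr rfl fun t _ => ?_
    simp only [L1, Finset.mul_sum]
    exact Finset.sum_congr rfl fun _ _ => by ring
  have h2 : ∀ a1 a2 b1 b2, L1 (H.mul a1 b1) (fun s => L1 (H.mul a2 b2) (fun t => f s t))
      = ∑ s, ∑ t, f s t * (H.mul a1 b1 s * H.mul a2 b2 t) := by
    intro a1 a2 b1 b2
    simp only [L1, Finset.mul_sum]
    exact Finset.sum_congr rfl fun _ _ => Finset.sum_congr rfl fun _ _ => by ring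
  rw [h1]
  simp only [h2, h, L2s, L2m]
  refine Finset.sum_congr rfl fun s _ => Finset.sum_congr rfl fun t _ => ?_
  congr 1
  simp only [L2, Finset.mul_sum]
  exact Finset.sum_congr rfl fun _ _ => Finset.sum_congr rfl fun _ _ =>
    Finset.sum_congr rfl fun _ _ => Finset.sum_congr rfl fun _ _ => by ring

theorem lemP (A B : ι) (g : ι → k) :
    L2 (H.comul A) (fun a2 a3 => L2 (H.comul B) (fun b2 b3 =>
      L1 (H.S a3) (fun a3' => L1 (H.S b3) (fun b3' => L1 (H.mul a2 b2) (fun m =>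
        L1 (H.mul b3' a3') (fun q => L1 (H.mul m q) g))))))
    = H.counit A * (H.counit B * L1 H.one g) := by
  calc _ = L2 (H.comul A) (fun a2 a3 => L1 (H.S a3) (fun a3' =>
          L2 (H.comul B) (fun b2 b3 => L1 (H.S b3) (fun b3' => L1 (H.mul b2 b3') (fun n =>
            L1 (H.mul n a3') (fun q => L1 (H.mul a2 q) g)))))) := by
        refine c2 fun a2 a3 => ?_
        rw [L21]
        refine c1 fun a3' => c2 fun b2 b3 => c1 fun b3' => ?_
        rw [H.assoc' b2 b3' a3' (fun q => L1 (H.mul a2 q) g), L11]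
        exact c1 fun q => H.assoc' a2 b2 q g
    _ = L2 (H.comul A) (fun a2 a3 => L1 (H.S a3) (fun a3' =>
          H.counit B * L1 (H.mul a2 a3') g)) := by
        refine c2 fun a2 a3 => c1 fun a3' => ?_
        rw [H.antipode_right' B (fun n => L1 (H.mul n a3') (fun q => L1 (H.mul a2 q) g)),
          H.one_mul' a3' (fun q => L1 (H.mul a2 q) g)]
    _ = _ := by
        simp only [L1m, L2m]
        rw [H.antipode_right']
        ring

theorem lemQ (A B : ι) (g : ι → k) :
    L2 (H.comul A) (fun a1 a2 => L2 (H.comul B) (fun b1 b2 =>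
      L1 (H.mul a1 b1) (fun s => L1 (H.mul a2 b2) (fun m =>
        L1 (H.S s) (fun s' => L1 (H.mul s' m) g)))))
    = H.counit A * (H.counit B * L1 H.one g) := by
  rw [← H.comul_mul' A B (fun s m => L1 (H.S s) (fun s' => L1 (H.mul s' m) g))]
  simp only [H.antipode_left']
  rw [L1m', H.counit_mul']
  ring

theorem S_anti (a b : ι) (f : ι → k) :
    L1 (H.mul a b) (fun s => L1 (H.S s) f)
      = L1 (H.S a) (fun a' => L1 (H.S b) (fun b' => L1 (H.mul b' a') f)) := by
  calc _ = L2 (H.comul a) (fun a1 A => L2 (H.comul b) (fun b1 B => H.counit A * (H.counit B *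
          L1 (H.mul a1 b1) (fun s => L1 (H.S s) f)))) := by
        simp only [L2m]
        rw [H.comul_counit' a (fun a1 => L2 (H.comul b) (fun b1 B => H.counit B *
          L1 (H.mul a1 b1) (fun s => L1 (H.S s) f)))]
        rw [H.comul_counit' b (fun b1 => L1 (H.mul a b1) (fun s => L1 (H.S s) f))]
    _ = L2 (H.comul a) (fun a1 A => L2 (H.comul b) (fun b1 B =>
          L1 (H.mul a1 b1) (fun s => L1 (H.S s) (fun s' =>
            H.counit A * (H.counit B * L1 H.one (fun r => L1 (H.mul s' r) f)))))) := by
        simp only [H.mul_one', L1m]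
    _ = L2 (H.comul a) (fun a1 A => L2 (H.comul b) (fun b1 B =>
          L1 (H.mul a1 b1) (fun s => L1 (H.S s) (fun s' =>
            L2 (H.comul A) (fun a2 a3 => L2 (H.comul B) (fun b2 b3 =>
              L1 (H.S a3) (fun a3' => L1 (H.S b3) (fun b3' => L1 (H.mul a2 b2) (fun m =>
                L1 (H.mul b3' a3') (fun q => L1 (H.mul m q)
                  (fun r => L1 (H.mul s' r) f))))))))))) := by
        simp only [H.lemP]
    _ = L2 (H.comul a) (fun a1 A => L2 (H.comul A) (fun a2 a3 =>
          L2 (H.comul b) (fun b1 B => L2 (H.comul B) (fun b2 b3 =>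
          L1 (H.S a3) (fun a3' => L1 (H.S b3) (fun b3' => L1 (H.mul b3' a3') (fun q =>
          L1 (H.mul a1 b1) (fun s => L1 (H.mul a2 b2) (fun m => L1 (H.S s) (fun s' =>
              L1 (H.mul s' m) (fun n => L1 (H.mul n q) f))))))))))) := by
        refine c2 fun a1 A => ?_
        rw [L22]
        refine c2 fun b1 B => ?_
        simp only [← L21]
        refine c2 fun a2 a3 => c2 fun b2 b3 => ?_
        refine (c1 fun s => L11 _ _ _).trans ?_
        refine (L11 _ _ _).trans (c1 fun a3' => ?_)
        refine (c1 fun s => L11 _ _ _).trans ?_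
        refine (L11 _ _ _).trans (c1 fun b3' => ?_)
        refine (c1 fun s => c1 fun s' => L11 _ _ _).trans ?_
        refine (c1 fun s => L11 _ _ _).trans ?_
        refine (L11 _ _ _).trans (c1 fun q => c1 fun s => ?_)
        refine (L11 _ _ _).trans (c1 fun m => c1 fun s' => ?_)
        exact (H.assoc' s' m q f).symm
    _ = L2 (H.comul a) (fun A a3 => L2 (H.comul b) (fun B b3 =>
          L1 (H.S a3) (fun a3' => L1 (H.S b3) (fun b3' => L1 (H.mul b3' a3') (fun q =>
          L2 (H.comul A) (fun a1 a2 => L2 (H.comul B) (fun b1 b2 =>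
          L1 (H.mul a1 b1) (fun s => L1 (H.mul a2 b2) (fun m => L1 (H.S s) (fun s' =>
              L1 (H.mul s' m) (fun n => L1 (H.mul n q) f))))))))))) := by
        rw [← H.coassoc']
        refine c2 fun A a3 => ?_
        simp only [← H.coassoc']
        rw [L22]
        refine c2 fun B b3 => ?_
        simp only [L21]
    _ = L2 (H.comul a) (fun A a3 => L2 (H.comul b) (fun B b3 =>
          L1 (H.S a3) (fun a3' => L1 (H.S b3) (fun b3' => L1 (H.mul b3' a3') (fun q =>
          H.counit A * (H.counit B * f q)))))) := by
        simp only [H.lemQ, H.one_mul']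
    _ = _ := by
        simp only [L1m, L2m]
        rw [H.counit_comul' a (fun a3 => L2 (H.comul b) (fun B b3 => H.counit B * L1 (H.S a3)
           (fun a3' => L1 (H.S b3) (fun b3' => L1 (H.mul b3' a3') f))))]
        rw [H.counit_comul' b (fun b3 => L1 (H.S a)
           (fun a3' => L1 (H.S b3) (fun b3' => L1 (H.mul b3' a3') f)))]

theorem S_one (f : ι → k) : L1 H.one (fun s => L1 (H.S s) f) = L1 H.one f := by
  have h : L1 H.one (fun r => L2 (H.comul r) (fun a b =>
      L1 (H.S a) (fun s => L1 (H.mul s b) f))) = L1 H.one f := by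
    simp only [H.antipode_left']
    rw [L1m', H.counit_one', _root_.one_mul]
  rw [H.comul_one'] at h
  rw [← h]
  refine c1 fun s => ?_
  rw [L11]
  simp only [H.mul_one']

theorem Sinv_one (f : ι → k) : L1 H.one (fun s => L1 (H.Sinv s) f) = L1 H.one f := by
  rw [← H.S_one]
  simp only [H.S_Sinv']

theorem J1 (u : ι) (f : ι → k) :
    L2 (H.comul u) (fun a b => L1 (H.Sinv b) (fun b' => L1 (H.mul b' a) f))
      = H.counit u * L1 H.one f := by
  calc _ = L2 (H.comul u) (fun a b => L1 (H.Sinv b) (fun b' => L1 (H.mul b' a)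
          (fun s => L1 (H.S s) (fun t => L1 (H.Sinv t) f)))) := by
        simp only [H.S_Sinv']
    _ = _ := by
        simp only [H.S_anti, H.Sinv_S']
        rw [H.antipode_left' u (fun t => L1 (H.Sinv t) f), H.Sinv_one]

theorem J2 (u : ι) (f : ι → k) :
    L2 (H.comul u) (fun a b => L1 (H.Sinv a) (fun a' => L1 (H.mul b a') f))
      = H.counit u * L1 H.one f := by
  calc _ = L2 (H.comul u) (fun a b => L1 (H.Sinv a) (fun a' => L1 (H.mul b a')
          (fun s => L1 (H.S s) (fun t => L1 (H.Sinv t) f)))) := by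
        simp only [H.S_Sinv']
    _ = L2 (H.comul u) (fun a b => L1 (H.S b) (fun b' => L1 (H.Sinv a) (fun a' =>
          L1 (H.S a') (fun a'' => L1 (H.mul a'' b') (fun t => L1 (H.Sinv t) f))))) := by
        simp only [H.S_anti]
        exact c2 fun a b => L11 _ _ _
    _ = _ := by
        simp only [H.Sinv_S']
        rw [H.antipode_right' u (fun t => L1 (H.Sinv t) f), H.Sinv_one]

theorem lemT (u : ι) (f : ι → ι → k) :
    L2 (H.comul u) (fun a b => L1 (H.Sinv a) (fun c => L2 (H.comul c) (fun p q =>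
      L1 (H.mul b p) (fun p' => f p' q))))
    = L1 H.one (fun p' => L1 (H.Sinv u) (fun q => f p' q)) := by
  calc _ = L2 (H.comul u) (fun a b => L2 (H.comul b) (fun b1 b2 =>
          L1 (H.Sinv a) (fun c => L2 (H.comul c) (fun p q => L1 (H.mul b1 p) (fun p' =>
          H.counit b2 * L1 H.one (fun o => L1 (H.mul o q) (fun q' => f p' q'))))))) := by
        simp only [H.one_mul', L1m, L2m]
        refine c2 fun a b => ?_
        rw [H.comul_counit' b (fun b1 => L1 (H.Sinv a) (fun c => L2 (H.comul c) (fun p q =>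
            L1 (H.mul b1 p) (fun p' => f p' q))))]
    _ = L2 (H.comul u) (fun a b => L2 (H.comul b) (fun b1 b2 =>
          L1 (H.Sinv a) (fun c => L2 (H.comul c) (fun p q => L1 (H.mul b1 p) (fun p' =>
          L2 (H.comul b2) (fun s t => L1 (H.Sinv t) (fun t' => L1 (H.mul t' s) (fun o =>
          L1 (H.mul o q) (fun q' => f p' q'))))))))) := by
        simp only [H.J1]
    _ = L2 (H.comul u) (fun a b => L2 (H.comul b) (fun b1 b2 => L2 (H.comul b2) (fun s t =>
          L1 (H.Sinv a) (fun c => L1 (H.Sinv t) (fun t' => L2 (H.comul c) (fun p q =>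
          L1 (H.mul b1 p) (fun p' => L1 (H.mul s q) (fun r => 
          L1 (H.mul t' r) (fun q' => f p' q'))))))))) := by
        refine c2 fun a b => c2 fun b1 b2 => ?_
        rw [L21]
        refine c1 fun c => ?_
        refine (c2 fun p q => (L21 _ _ _).symm).trans ?_
        refine (L22 _ _ _).trans (c2 fun s t => ?_)
        refine (c2 fun p q => L11 _ _ _).trans ?_
        refine (L21 _ _ _).trans (c1 fun t' => c2 fun p q => c1 fun p' => ?_)
        exact H.assoc' t' s q (fun q' => f p' q')
    _ = L2 (H.comul u) (fun n t => L2 (H.comul n) (fun a m =>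
          L1 (H.Sinv a) (fun c => L1 (H.Sinv t) (fun t' => 
          L2 (H.comul m) (fun b1 s => L2 (H.comul c) (fun p q =>
          L1 (H.mul b1 p) (fun p' => L1 (H.mul s q) (fun r => 
          L1 (H.mul t' r) (fun q' => f p' q'))))))))) := by
        refine (c2 fun a b => (H.coassoc' b (fun b1 s t => _)).symm).trans ?_
        refine (H.coassoc' u (fun a m t => _)).symm.trans ?_
        simp only [L21]
    _ = L2 (H.comul u) (fun n t => L1 (H.Sinv t) (fun t' => L2 (H.comul n) (fun a m =>
          L1 (H.Sinv a) (fun c => L1 (H.mul m c) (fun d => L2 (H.comul d) (fun p' r =>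
          L1 (H.mul t' r) (fun q' => f p' q'))))))) := by
        refine c2 fun n t => ?_
        rw [← L21]
        refine c2 fun a m => ?_
        rw [L11]
        simp only [H.comul_mul']
    _ = L2 (H.comul u) (fun n t => L1 (H.Sinv t) (fun t' => H.counit n *
          L1 H.one (fun p' => f p' t'))) := by
        simp only [H.J2, H.comul_one', H.mul_one']
    _ = _ := by
        simp only [L1m]
        rw [H.counit_comul' u (fun t => L1 (H.Sinv t) (fun i => L1 H.one fun p' => f p' i)), L11]

/-- the target map as a weighted sum -/
def B (y : ι → k) (t : ι) (f : ι → k) : k :=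
  L2 (H.comul t) (fun b n => L2 (H.comul n) (fun w z => y w *
    L1 (H.Sinv z) (fun a => L1 (H.mul a b) f)))

theorem main_id (x y : ι → k) (u : ι) (g : ι → k) :
    L2 (H.comul u) (fun s t => H.B y s (fun c => L2 (H.comul c) (fun p q =>
      L1 (H.mul t p) x * g q)))
    = L2 (H.comul u) (fun s t => x s * H.B y t g) := by
  calc _ = L2 (H.comul u) (fun s t => L2 (H.comul s) (fun b n => L2 (H.comul n) (fun w z => y w *
            L1 (H.Sinv z) (fun a => L2 (H.comul a) (fun a1 a2 => L1 (H.mul t a1) (fun h =>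
            L2 (H.comul b) (fun b1 b2 => L1 (H.mul h b1) x * L1 (H.mul a2 b2) g)))))) ) := by
        simp only [B, H.comul_mul']
        refine c2 fun s t => c2 fun b n => c2 fun w z => congrArg _ (c1 fun a => c2 fun a1 a2 => ?_)
        rw [← L21]
        refine c2 fun b1 b2 => ?_
        simp only [L1m, L1m', ← H.assoc']
    _ = L2 (H.comul u) (fun b n => L2 (H.comul n) (fun w l => y w * L2 (H.comul l) (fun z t => 
            L1 (H.Sinv z) (fun a => L2 (H.comul a) (fun a1 a2 => L1 (H.mul t a1) (fun h =>
            L2 (H.comul b) (fun b1 b2 => L1 (H.mul h b1) x * L1 (H.mul a2 b2) g)))))) ) := by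
        rw [H.coassoc']
        refine c2 fun b n => ?_
        rw [H.coassoc']
        simp only [L2m]
    _ = L2 (H.comul u) (fun b n => L2 (H.comul n) (fun w l => y w * L1 (H.Sinv l) (fun a2 =>
            L2 (H.comul b) (fun b1 b2 => x b1 * L1 (H.mul a2 b2) g)))) := by
        simp only [H.lemT]
        refine c2 fun b n => c2 fun w l => congrArg _ ?_
        rw [L11]
        refine c1 fun a2 => ?_
        rw [← L21]
        refine c2 fun b1 b2 => ?_
        rw [L1m', H.one_mul']
    _ = L2 (H.comul u) (fun b n => L2 (H.comul b) (fun b1 b2 => x b1 *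
          L2 (H.comul n) (fun w l => y w * L1 (H.Sinv l) (fun a2 => L1 (H.mul a2 b2) g)))) := by
        refine c2 fun b n => ?_
        simp only [← L2m, ← L1m]
        rw [← L22]
        refine c2 fun w l => ?_
        rw [← L21]
        refine c2 fun b1 b2 => c1 fun a2 => ?_
        ring
    _ = _ := by
        rw [H.coassoc']
        simp only [B, L2m]

theorem beta_eq (y : ι → k) (u v : ι) : H.betaH y u v = H.B y u (e v) := by
  have h1 : H.betaH y u v = ∑ b, L1 (fun a => H.mul a b v) (fun a => L1 (H.comul u b) (fun n =>
      L2 (H.comul n) (fun w z => y w * H.Sinv z a))) := by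
    simp only [betaH, adX, mulX, SXinv, e, L1, L2]
    rw [Finset.sum_comm]
    simp only [mul_ite, _root_.mul_one, mul_zero, ite_mul, zero_mul, Finset.sum_ite_eq,
      Finset.mem_univ, if_true, mul_assoc]
    rw [Finset.sum_congr rfl fun a _ => Finset.sum_comm, Finset.sum_comm]
    refine Finset.sum_congr rfl fun b _ => Finset.sum_congr rfl fun a _ => ?_
    simp
  rw [h1, B, L2]
  refine Finset.sum_congr rfl fun b _ => ?_
  refine (L11 _ _ _).trans (c1 fun n => ?_)
  refine (L21 _ _ _).symm.trans (c2 fun w z => ?_)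
  rw [L1m]
  congr 1
  simp [L1, e, mul_comm]

theorem beta_L1 (y : ι → k) (u : ι) (f : ι → k) : L1 (H.betaH y u) f = H.B y u f := by
  have h : ∀ a b, L1 (H.mul a b) f = ∑ q, f q * L1 (H.mul a b) (e q) := by
    intro a b
    simp [L1, e, mul_comm]
  simp only [B, h]
  simp only [L1s, L1m, Finset.mul_sum, L2s]
  refine Finset.sum_congr rfl fun q _ => ?_
  rw [beta_eq, B, mul_comm]
  simp only [← L2m]
  exact c2 fun _ _ => c2 fun _ _ => by ring

theorem smash_eq (c d : ι → ι → k) (u v : ι) : H.smashMul c d u v =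
    L2 (H.comul u) (fun s t => L1 (c s) (fun q => L2 (H.comul q) (fun a b =>
     L1 (H.mul t a) (fun r => L1 (d r) (fun l => H.mul b l v))))) := by
  have hA : ∀ b s, H.mulA (e b) (e s) v = H.mul b s v := by
    intro b s; simp [mulA, e]
  have hX : ∀ p a r, H.mulX (e p) (H.hit (e a) (e r)) u
      = ∑ t, H.comul u p t * H.mul t a r := by
    intro p a r; simp [mulX, hit, e]
  simp only [smashMul, hA, hX]
  rw [L2]
  refine Finset.sum_congr rfl fun p _ => ?_
  change _ = L1 (H.comul u p) _
  rw [L11]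
  rw [L1]
  refine Finset.sum_congr rfl fun q _ => ?_
  rw [← L21, L2]
  simp only [Finset.mul_sum]
  simp only [L1, Finset.mul_sum, Finset.sum_mul]
  -- left order: r s a b t, right order: a b t r s
  rw [Finset.sum_congr rfl fun r _ => Finset.sum_comm]
  rw [Finset.sum_comm]
  refine Finset.sum_congr rfl fun a _ => ?_
  rw [Finset.sum_congr rfl fun r _ => Finset.sum_comm]
  rw [Finset.sum_comm]
  refine Finset.sum_congr rfl fun b _ => ?_
  rw [Finset.sum_congr rfl fun r _ => Finset.sum_comm]
  rw [Finset.sum_comm]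
  exact Finset.sum_congr rfl fun _ _ => Finset.sum_congr rfl fun _ _ =>
    Finset.sum_congr rfl fun _ _ => by ring

theorem alpha_L1 (x : ι → k) (u : ι) (f : ι → k) :
    L1 (H.alphaH x u) f = x u * L1 H.one f := by
  simp only [L1, alphaH, Finset.mul_sum, mul_assoc]

theorem left_eq (x y : ι → k) (u v : ι) : H.smashMul (H.alphaH x) (H.betaH y) u v
    = L2 (H.comul u) (fun s t => x s * H.B y t (e v)) := by
  rw [smash_eq]
  refine c2 fun s t => ?_
  rw [alpha_L1, H.comul_one']
  congr 1
  rw [L11]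
  simp only [H.mul_one']
  rw [L11, ← beta_L1]
  refine c1 fun l => ?_
  rw [L1, H.one_mul]
  simp [e, eq_comm]

theorem right_eq (x y : ι → k) (u v : ι) : H.smashMul (H.betaH y) (H.alphaH x) u v
    = L2 (H.comul u) (fun s t => H.B y s (fun c => L2 (H.comul c) (fun p q =>
      L1 (H.mul t p) x * e v q))) := by
  rw [smash_eq]
  refine c2 fun s t => ?_
  rw [beta_L1]
  congr 1
  funext c
  refine c2 fun p q => ?_
  rw [← L1m']
  refine c1 fun r => ?_
  rw [alpha_L1, L1, H.mul_one]
  simp [e, eq_comm]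

end helpers

end FinHopfSC

/-- in the Heisenberg double `H(A*) = A* # A` of a
finite-dimensional Hopf algebra, the images of the source map `α(x) = x # 1`
and the target map `β(y) = ∑ t, ad_{x_t}(y) # a_t` commute:
`α(x) β(y) = β(y) α(x)` for all `x, y ∈ A*`. -/
theorem stmt8 (k : Type*) [Field k] (ι : Type*) [Fintype ι] [DecidableEq ι]
    (H : FinHopfSC k ι) (x y : ι → k) :
    H.smashMul (H.alphaH x) (H.betaH y) = H.smashMul (H.betaH y) (H.alphaH x) := by
  funext u v
  rw [FinHopfSC.left_eq, FinHopfSC.right_eq, FinHopfSC.main_id]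
end

section
/- Let q be a primitive d-th root of unity, d > 1 odd, and let H be the algebra over ℂ with generators E, K, κ, η and relations KE = q²EK, K^d = 1, E^d = 0, κη = q⁻²ηκ, κ^d = 1, η^d = 0, Kκ = q²κK, Kη = ηK, Eκ = κE, Eη = ηE + κK (the Heisenberg double of the Taft algebra dual). Then the elements η^i κ^j E^m K^n for 0 ≤ i, j, m, n ≤ d−1 span H, and the assignment τ(κ) = q²κ + (q²−1)ηEK⁻¹, τ(η) = ηK⁻¹, τ(K) = K⁻¹, τ(E) = −EK⁻¹ extends to an algebra anti-homomorphism τ : H → H. -/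
/-- The defining relations of the Heisenberg double `H` of the dual of the Taft
algebra: generators `E` (index `0`), `K` (index `1`), `κ` (index `2`),
`η` (index `3`) and relations `KE = q²EK`, `K^d = 1`, `E^d = 0`,
`κη = q⁻²ηκ`, `κ^d = 1`, `η^d = 0`, `Kκ = q²κK`, `Kη = ηK`, `Eκ = κE`,
`Eη = ηE + κK`. -/
inductive HeisRel (q : ℂ) (d : ℕ) :
    FreeAlgebra ℂ (Fin 4) → FreeAlgebra ℂ (Fin 4) → Prop
  | KE : HeisRel q d (FreeAlgebra.ι ℂ 1 * FreeAlgebra.ι ℂ 0)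
      (q ^ 2 • (FreeAlgebra.ι ℂ 0 * FreeAlgebra.ι ℂ 1))
  | K_pow : HeisRel q d (FreeAlgebra.ι ℂ 1 ^ d) 1
  | E_pow : HeisRel q d (FreeAlgebra.ι ℂ 0 ^ d) 0
  | kappa_eta : HeisRel q d (FreeAlgebra.ι ℂ 2 * FreeAlgebra.ι ℂ 3)
      ((q ^ 2)⁻¹ • (FreeAlgebra.ι ℂ 3 * FreeAlgebra.ι ℂ 2))
  | kappa_pow : HeisRel q d (FreeAlgebra.ι ℂ 2 ^ d) 1
  | eta_pow : HeisRel q d (FreeAlgebra.ι ℂ 3 ^ d) 0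
  | K_kappa : HeisRel q d (FreeAlgebra.ι ℂ 1 * FreeAlgebra.ι ℂ 2)
      (q ^ 2 • (FreeAlgebra.ι ℂ 2 * FreeAlgebra.ι ℂ 1))
  | K_eta : HeisRel q d (FreeAlgebra.ι ℂ 1 * FreeAlgebra.ι ℂ 3)
      (FreeAlgebra.ι ℂ 3 * FreeAlgebra.ι ℂ 1)
  | E_kappa : HeisRel q d (FreeAlgebra.ι ℂ 0 * FreeAlgebra.ι ℂ 2)
      (FreeAlgebra.ι ℂ 2 * FreeAlgebra.ι ℂ 0)
  | E_eta : HeisRel q d (FreeAlgebra.ι ℂ 0 * FreeAlgebra.ι ℂ 3)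
      (FreeAlgebra.ι ℂ 3 * FreeAlgebra.ι ℂ 0 +
        FreeAlgebra.ι ℂ 2 * FreeAlgebra.ι ℂ 1)


structure HRels {A : Type*} [Ring A] [Algebra ℂ A] (p : ℂ) (d : ℕ) (E K k e : A) : Prop where
  KE : K * E = p • (E * K)
  Kd : K ^ d = 1
  Ed : E ^ d = 0
  ke : k * e = p⁻¹ • (e * k)
  kd : k ^ d = 1
  ed : e ^ d = 0
  Kk : K * k = p • (k * K)
  Ke : K * e = e * K
  Ek : E * k = k * E
  Ee : E * e = e * E + k * K

section helpers

variable {A : Type*} [Ring A] [Algebra ℂ A]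

theorem qcomm_left {a b : A} {c : ℂ} (h : a * b = c • (b * a)) (n : ℕ) :
    a * b ^ n = c ^ n • (b ^ n * a) := by
  induction n with
  | zero => simp
  | succ n ih =>
    rw [pow_succ b, ← mul_assoc, ih, smul_mul_assoc, mul_assoc, h, mul_smul_comm, smul_smul,
      pow_succ c, mul_assoc]

theorem qcomm_right {a b : A} {c : ℂ} (h : a * b = c • (b * a)) (n : ℕ) :
    a ^ n * b = c ^ n • (b * a ^ n) := by
  induction n with
  | zero => simp
  | succ n ih =>
    rw [pow_succ a, mul_assoc, h, mul_smul_comm, ← mul_assoc, ih, smul_mul_assoc, smul_smul,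
      pow_succ c, mul_assoc, mul_comm]

theorem qcomm_inv {K L b : A} {p : ℂ} (hp : p ≠ 0) (h1 : K * L = 1) (h2 : L * K = 1)
    (h : K * b = p • (b * K)) : L * b = p⁻¹ • (b * L) := by
  have h3 : L * (K * b) * L = p • (L * b) := by
    rw [h, mul_smul_comm, smul_mul_assoc, mul_assoc, mul_assoc, h1, mul_one]
  rw [← mul_assoc, h2, one_mul] at h3
  rw [h3, smul_smul, inv_mul_cancel₀ hp, one_smul]

theorem qcomm_mul_pow {a b : A} {c : ℂ} (h : b * a = c • (a * b)) (n : ℕ) :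
    ∃ s : ℂ, (a * b) ^ n = s • (a ^ n * b ^ n) := by
  induction n with
  | zero => exact ⟨1, by simp⟩
  | succ n ih =>
    obtain ⟨s, hs⟩ := ih
    refine ⟨s * c ^ n, ?_⟩
    rw [pow_succ, hs, smul_mul_assoc, mul_assoc, ← mul_assoc (b ^ n), qcomm_right h, pow_succ a,
      pow_succ b]
    simp only [smul_mul_assoc, mul_smul_comm, smul_smul, mul_assoc]

theorem assoc_rule {a b c : A} (h : a * b = c) (x : A) : a * (b * x) = c * x := by
  rw [← mul_assoc, h]

theorem prod_dvd_X_pow (d : ℕ) (p : ℂ) (hp : IsPrimitiveRoot p d) :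
    (∏ i ∈ Finset.range d, (Polynomial.X - Polynomial.C (p ^ (i + 1)))) ∣
      (Polynomial.X ^ d - 1 : Polynomial ℂ) := by
  rcases Nat.eq_zero_or_pos d with h0 | hpos
  · subst h0; simp
  have hp0 : p ≠ 0 := hp.ne_zero hpos.ne'
  apply Finset.prod_dvd_of_coprime
  · intro i hi j hj hij
    apply Polynomial.isCoprime_X_sub_C_of_isUnit_sub
    rw [isUnit_iff_ne_zero, sub_ne_zero]
    intro h
    rw [pow_succ, pow_succ] at h
    have h' := mul_right_cancel₀ hp0 h
    exact hij (hp.pow_inj (Finset.mem_range.1 hi) (Finset.mem_range.1 hj) h')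
  · intro i _
    rw [Polynomial.dvd_iff_isRoot]
    have hr : (p ^ (i + 1)) ^ d = 1 := by
      rw [← pow_mul, mul_comm, pow_mul, hp.pow_eq_one, one_pow]
    simp [Polynomial.IsRoot, hr]

namespace HRels

variable {p : ℂ} {d : ℕ} {E K k e L : A}

theorem E_pow_e_E (h : HRels p d E K k e) (n : ℕ) :
    (p - 1) • (E ^ n * e * E) = (p - 1) • (e * E ^ (n + 1))
      + ((p ^ n - 1) * p) • (k * E ^ n * K) := by
  induction n with
  | zero => simp
  | succ n ih =>
    have h1 : (p - 1) • (E ^ (n + 1) * e * E) = E * ((p - 1) • (E ^ n * e * E)) := by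
      rw [mul_smul_comm, pow_succ']; simp only [mul_assoc]
    rw [h1, ih, mul_add, mul_smul_comm, mul_smul_comm, ← mul_assoc, h.Ee, add_mul, mul_assoc k K,
      qcomm_left h.KE, ← mul_assoc, ← mul_assoc, h.Ek, mul_assoc k E, ← pow_succ' E, mul_assoc e E,
      ← pow_succ' E, mul_smul_comm, mul_assoc k]
    match_scalars <;> ring

theorem X_comm (h : HRels p d E K k e) (hp : p ≠ 0) (h1 : K * L = 1) (h2 : L * K = 1) (n : ℕ) :
    (e ^ n * E ^ n * L ^ n) * k = k * (e ^ n * E ^ n * L ^ n) := by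
  have hL := qcomm_inv hp h1 h2 h.Kk
  have hE : E ^ n * k = k * E ^ n := ((show Commute E k from h.Ek).pow_left n).eq
  have hk := qcomm_left h.ke n
  have hk' : e ^ n * k = p ^ n • (k * e ^ n) := by
    rw [hk, smul_smul, ← mul_pow, mul_inv_cancel₀ hp, one_pow, one_smul]
  rw [mul_assoc, qcomm_right hL, mul_smul_comm, ← mul_assoc, mul_assoc (e ^ n), hE, ← mul_assoc,
    hk', smul_mul_assoc, smul_mul_assoc, smul_smul, ← mul_pow, inv_mul_cancel₀ hp, one_pow,
    one_smul]
  simp only [mul_assoc]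

theorem X_T (h : HRels p d E K k e) (hp : p ≠ 0) (h1 : K * L = 1) (h2 : L * K = 1) (n : ℕ) :
    (e ^ n * E ^ n * L ^ n) * (p • k + (p - 1) • (e * E * L)) =
      p ^ (n + 1) • ((e ^ n * E ^ n * L ^ n) * k) +
        ((p⁻¹) ^ n * (p - 1)) • (e ^ (n + 1) * E ^ (n + 1) * L ^ (n + 1)) := by
  have hLE := qcomm_inv hp h1 h2 h.KE
  have hLk := qcomm_inv hp h1 h2 h.Kk
  have hLe : L * e = (1 : ℂ) • (e * L) := by
    simpa using qcomm_inv (p := 1) one_ne_zero h1 h2 (by simpa using h.Ke)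
  have e1 : (e ^ n * E ^ n * L ^ n) * ((p - 1) • (e * E * L)) =
      (p⁻¹) ^ n • (e ^ n * ((p - 1) • (E ^ n * e * E)) * L ^ (n + 1)) := by
    have : L ^ n * (e * E * L) = (p⁻¹) ^ n • (e * E * L ^ (n + 1)) := by
      rw [← mul_assoc, ← mul_assoc, qcomm_right hLe, one_pow, one_smul, mul_assoc e,
        qcomm_right hLE, pow_succ]
      simp only [smul_mul_assoc, mul_smul_comm, mul_assoc]
    rw [mul_smul_comm, mul_assoc, this]
    simp only [smul_mul_assoc, mul_smul_comm, mul_assoc]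
    rw [smul_comm]
  have e2 : k * E ^ n * K * L ^ (n + 1) = k * E ^ n * L ^ n := by
    rw [pow_succ', ← mul_assoc, mul_assoc _ K, h1, mul_one]
  have e3 : (e ^ n * E ^ n * L ^ n) * k = (p⁻¹) ^ n • (e ^ n * (k * E ^ n * L ^ n)) := by
    have hE : E ^ n * k = k * E ^ n := ((show Commute E k from h.Ek).pow_left n).eq
    rw [mul_assoc, qcomm_right hLk, mul_smul_comm, ← mul_assoc, mul_assoc (e ^ n), hE]
    simp only [mul_assoc]
  rw [mul_add, e1, E_pow_e_E h, mul_smul_comm, mul_add, add_mul, mul_smul_comm, mul_smul_comm,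
    smul_mul_assoc, smul_mul_assoc, mul_assoc (e ^ n) (k * E ^ n * K), e2, e3, ← mul_assoc (e ^ n) e,
    ← pow_succ]
  have : (p⁻¹) ^ n * p ^ n = 1 := by rw [← mul_pow, inv_mul_cancel₀ hp, one_pow]
  match_scalars
  · ring
  · ring

theorem T_pow (h : HRels p d E K k e) (hpr : IsPrimitiveRoot p d) (hd : 1 < d)
    (h1 : K * L = 1) (h2 : L * K = 1) :
    (p • k + (p - 1) • (e * E * L)) ^ d = 1 := by
  have hp : p ≠ 0 := hpr.ne_zero (by omega)
  set T := p • k + (p - 1) • (e * E * L) with hT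
  have hkT : Commute k T := by
    have := X_comm h hp h1 h2 1
    simp only [pow_one] at this
    have hc : Commute k (e * E * L) := this.symm
    exact ((Commute.refl k).smul_right p).add_right (hc.smul_right _)
  set k' := k ^ (d - 1) with hk'
  have hk'T : Commute k' T := hkT.pow_left _
  have hkk' : k * k' = 1 := by
    rw [hk', ← pow_succ', Nat.sub_add_cancel hd.le, h.kd]
  have key : ∀ n, ∃ c : ℂ, Polynomial.aeval (T * k')
      (∏ i ∈ Finset.range n, (Polynomial.X - Polynomial.C (p ^ (i + 1)))) =
        c • ((e ^ n * E ^ n * L ^ n) * k' ^ n) := by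
    intro n
    induction n with
    | zero => exact ⟨1, by simp⟩
    | succ n ih =>
      obtain ⟨c, hc⟩ := ih
      refine ⟨c * ((p⁻¹) ^ n * (p - 1)), ?_⟩
      rw [Finset.prod_range_succ, map_mul, hc]
      have a1 : (e ^ n * E ^ n * L ^ n) * k' ^ n * (T * k') =
          (e ^ n * E ^ n * L ^ n) * T * k' ^ (n + 1) := by
        rw [mul_assoc, ← mul_assoc (k' ^ n), (hk'T.pow_left n).eq, pow_succ]
        simp only [mul_assoc]
      have a2 : k * k' ^ (n + 1) = k' ^ n := by
        rw [pow_succ', ← mul_assoc, hkk', one_mul]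
      rw [map_sub, Polynomial.aeval_X, Polynomial.aeval_C, Algebra.algebraMap_eq_smul_one, mul_sub,
        smul_mul_assoc, a1, hT, X_T h hp h1 h2, add_mul, smul_mul_assoc, mul_assoc _ k, a2,
        mul_smul_comm, mul_one, smul_mul_assoc]
      match_scalars
      · ring
      · ring
  obtain ⟨c, hc⟩ := key d
  have h0 : Polynomial.aeval (T * k') (Polynomial.X ^ d - 1 : Polynomial ℂ) = 0 := by
    obtain ⟨r, hr⟩ := prod_dvd_X_pow d p hpr
    rw [hr, map_mul, hc, h.Ed]
    simp
  simp only [map_sub, map_pow, Polynomial.aeval_X, map_one] at h0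
  rw [hk'T.symm.mul_pow, hk', ← pow_mul, mul_comm (d - 1), pow_mul, h.kd, one_pow, mul_one] at h0
  exact sub_eq_zero.1 h0

theorem op_rels (h : HRels p d E K k e) (hpr : IsPrimitiveRoot p d) (hd : 1 < d)
    (h1 : K * L = 1) (h2 : L * K = 1) (hLd : L ^ d = 1) :
    HRels p d (MulOpposite.op (-(E * L))) (MulOpposite.op L)
      (MulOpposite.op (p • k + (p - 1) • (e * E * L))) (MulOpposite.op (e * L)) := by
  have hp : p ≠ 0 := hpr.ne_zero (by omega)
  have hLE := qcomm_inv hp h1 h2 h.KE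
  have hLk := qcomm_inv hp h1 h2 h.Kk
  have hLe : L * e = e * L := by
    simpa using qcomm_inv (p := 1) one_ne_zero h1 h2 (by simpa using h.Ke)
  constructor
  case Kd => rw [← MulOpposite.op_pow, hLd, MulOpposite.op_one]
  case Ed =>
    obtain ⟨s, hs⟩ := qcomm_mul_pow hLE d
    rw [← MulOpposite.op_pow, neg_pow, hs, h.Ed]; simp
  case kd => rw [← MulOpposite.op_pow, T_pow h hpr hd h1 h2, MulOpposite.op_one]
  case ed =>
    obtain ⟨s, hs⟩ := qcomm_mul_pow (a := e) (b := L) (c := 1) (by simpa using hLe) d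
    rw [← MulOpposite.op_pow, hs, h.ed]; simp
  all_goals
    simp only [← MulOpposite.op_mul, ← MulOpposite.op_smul, ← MulOpposite.op_add]
    congr 1
    simp only [mul_assoc, mul_add, add_mul, smul_add, smul_mul_assoc, mul_smul_comm, smul_smul,
      neg_mul, mul_neg, smul_neg, mul_one, one_mul, neg_add,
      h.KE, h.ke, h.Kk, h.Ke, h.Ek, h.Ee, hLE, hLk, hLe, h1, h2,
      assoc_rule h.KE, assoc_rule h.ke, assoc_rule h.Kk, assoc_rule h.Ke, assoc_rule h.Ek, assoc_rule h.Ee, assoc_rule hLE, assoc_rule hLk, assoc_rule hLe, assoc_rule h1, assoc_rule h2]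
    try match_scalars <;> field_simp <;> ring

theorem E_e_pow (h : HRels p d E K k e) (n : ℕ) :
    ∃ c : ℂ, E * e ^ (n + 1) = e ^ (n + 1) * E + c • (e ^ n * k * K) := by
  induction n with
  | zero => exact ⟨1, by simp [h.Ee]⟩
  | succ n ih =>
    obtain ⟨c, hc⟩ := ih
    refine ⟨1 + c * p⁻¹, ?_⟩
    rw [pow_succ e (n + 1), ← mul_assoc, hc, add_mul, mul_assoc _ E, h.Ee, smul_mul_assoc,
      mul_assoc _ K, h.Ke, mul_assoc _ k, ← mul_assoc k e, h.ke, mul_add, pow_succ e n]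
    simp only [mul_assoc, smul_mul_assoc, mul_smul_comm]
    match_scalars <;> ring

theorem span_closed (h : HRels p d E K k e) (S : Submodule ℂ A)
    (hS : S = Submodule.span ℂ {x : A | ∃ i j m n : ℕ, x = e ^ i * k ^ j * E ^ m * K ^ n}) :
    ∀ g, g = E ∨ g = K ∨ g = k ∨ g = e → ∀ x ∈ S, g * x ∈ S := by
  have hm : ∀ i j m n : ℕ, e ^ i * k ^ j * E ^ m * K ^ n ∈ S := fun i j m n => by
    rw [hS]; exact Submodule.subset_span ⟨i, j, m, n, rfl⟩
  have hK : ∀ i j m n : ℕ, K * (e ^ i * k ^ j * E ^ m * K ^ n) =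
      (p ^ j * p ^ m) • (e ^ i * k ^ j * E ^ m * K ^ (n + 1)) := by
    intro i j m n
    have hKe : K * e ^ i = e ^ i * K := ((show Commute K e from h.Ke).pow_right i).eq
    simp only [mul_assoc, assoc_rule hKe, assoc_rule (qcomm_left h.Kk j), assoc_rule (qcomm_left h.KE m), smul_mul_assoc,
      mul_smul_comm, smul_smul, pow_succ' K]
  have hk : ∀ i j m n : ℕ, k * (e ^ i * k ^ j * E ^ m * K ^ n) =
      ((p⁻¹) ^ i) • (e ^ i * k ^ (j + 1) * E ^ m * K ^ n) := by
    intro i j m n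
    simp only [mul_assoc, assoc_rule (qcomm_left h.ke i), smul_mul_assoc, pow_succ' k]
  have he : ∀ i j m n : ℕ, e * (e ^ i * k ^ j * E ^ m * K ^ n) =
      (e ^ (i + 1) * k ^ j * E ^ m * K ^ n) := by
    intro i j m n
    simp only [mul_assoc, pow_succ' e]
  have hEk : ∀ j m n : ℕ, E * (k ^ j * E ^ m * K ^ n) = k ^ j * E ^ (m + 1) * K ^ n := by
    intro j m n
    have hE : E * k ^ j = k ^ j * E := ((show Commute E k from h.Ek).pow_right j).eq
    simp only [mul_assoc, assoc_rule hE, pow_succ' E]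
  have hE : ∀ i j m n : ℕ, E * (e ^ i * k ^ j * E ^ m * K ^ n) ∈ S := by
    intro i j m n
    rcases i with _ | i
    · have := hm 0 j (m + 1) n
      simp only [pow_zero, one_mul] at this ⊢
      rwa [hEk]
    · obtain ⟨c, hc⟩ := E_e_pow h i
      have : E * (e ^ (i + 1) * k ^ j * E ^ m * K ^ n) =
          e ^ (i + 1) * (E * (k ^ j * E ^ m * K ^ n)) +
            c • (e ^ i * (k * (K * (k ^ j * E ^ m * K ^ n)))) := by
        simp only [mul_assoc, assoc_rule hc, add_mul, smul_mul_assoc]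
      have a1 := hK 0 j m n
      have a2 := hk 0 j m (n + 1)
      simp only [pow_zero, one_mul, one_smul] at a1 a2
      rw [this, hEk, a1, mul_smul_comm, a2, mul_smul_comm]
      refine S.add_mem ?_ (S.smul_mem _ (S.smul_mem _ ?_))
      · simpa only [mul_assoc] using hm (i + 1) j (m + 1) n
      · simpa only [mul_assoc] using hm i (j + 1) m (n + 1)
  intro g hg x hx
  rw [hS] at hx
  induction hx using Submodule.span_induction with
  | mem x hx =>
    obtain ⟨i, j, m, n, rfl⟩ := hx
    rcases hg with rfl | rfl | rfl | rfl
    · exact hE i j m n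
    · rw [hK]; exact S.smul_mem _ (hm _ _ _ _)
    · rw [hk]; exact S.smul_mem _ (hm _ _ _ _)
    · rw [he]; exact hm _ _ _ _
  | zero => simp
  | add x y _ _ hx hy => rw [mul_add]; exact S.add_mem hx hy
  | smul c x _ hx => rw [mul_smul_comm]; exact S.smul_mem _ hx

theorem span_le (h : HRels p d E K k e) (hd : 0 < d) :
    Submodule.span ℂ {x : A | ∃ i j m n : ℕ, x = e ^ i * k ^ j * E ^ m * K ^ n} ≤
    Submodule.span ℂ {x : A | ∃ i j m n : Fin d,
      x = e ^ (i : ℕ) * k ^ (j : ℕ) * E ^ (m : ℕ) * K ^ (n : ℕ)} := by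
  rw [Submodule.span_le]
  rintro x ⟨i, j, m, n, rfl⟩
  by_cases hi : i < d
  swap
  · rw [pow_eq_zero_of_le (not_lt.1 hi) h.ed]; simp
  by_cases hm : m < d
  swap
  · rw [pow_eq_zero_of_le (not_lt.1 hm) h.Ed]; simp
  refine Submodule.subset_span ⟨⟨i, hi⟩, ⟨j % d, Nat.mod_lt _ hd⟩, ⟨m, hm⟩,
    ⟨n % d, Nat.mod_lt _ hd⟩, ?_⟩
  simp only [← pow_eq_pow_mod _ h.kd, ← pow_eq_pow_mod _ h.Kd]

end HRels

end helpers

theorem heis_rels (q : ℂ) (d : ℕ) :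
    HRels (q ^ 2) d (RingQuot.mkAlgHom ℂ (HeisRel q d) (FreeAlgebra.ι ℂ 0))
      (RingQuot.mkAlgHom ℂ (HeisRel q d) (FreeAlgebra.ι ℂ 1))
      (RingQuot.mkAlgHom ℂ (HeisRel q d) (FreeAlgebra.ι ℂ 2))
      (RingQuot.mkAlgHom ℂ (HeisRel q d) (FreeAlgebra.ι ℂ 3)) := by
  constructor
  · simpa only [map_mul, map_smul] using RingQuot.mkAlgHom_rel ℂ (HeisRel.KE (q := q) (d := d))
  · simpa only [map_pow, map_one] using RingQuot.mkAlgHom_rel ℂ (HeisRel.K_pow (q := q) (d := d))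
  · simpa only [map_pow, map_zero] using RingQuot.mkAlgHom_rel ℂ (HeisRel.E_pow (q := q) (d := d))
  · simpa only [map_mul, map_smul] using
      RingQuot.mkAlgHom_rel ℂ (HeisRel.kappa_eta (q := q) (d := d))
  · simpa only [map_pow, map_one] using
      RingQuot.mkAlgHom_rel ℂ (HeisRel.kappa_pow (q := q) (d := d))
  · simpa only [map_pow, map_zero] using
      RingQuot.mkAlgHom_rel ℂ (HeisRel.eta_pow (q := q) (d := d))
  · simpa only [map_mul, map_smul] using
      RingQuot.mkAlgHom_rel ℂ (HeisRel.K_kappa (q := q) (d := d))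
  · simpa only [map_mul] using RingQuot.mkAlgHom_rel ℂ (HeisRel.K_eta (q := q) (d := d))
  · simpa only [map_mul] using RingQuot.mkAlgHom_rel ℂ (HeisRel.E_kappa (q := q) (d := d))
  · simpa only [map_mul, map_add] using
      RingQuot.mkAlgHom_rel ℂ (HeisRel.E_eta (q := q) (d := d))

theorem heis_lift {B : Type*} [Ring B] [Algebra ℂ B] (q : ℂ) (d : ℕ) {E K k e : B}
    (h : HRels (q ^ 2) d E K k e) :
    ∃ f : RingQuot (HeisRel q d) →ₐ[ℂ] B,
      f (RingQuot.mkAlgHom ℂ (HeisRel q d) (FreeAlgebra.ι ℂ 0)) = E ∧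
      f (RingQuot.mkAlgHom ℂ (HeisRel q d) (FreeAlgebra.ι ℂ 1)) = K ∧
      f (RingQuot.mkAlgHom ℂ (HeisRel q d) (FreeAlgebra.ι ℂ 2)) = k ∧
      f (RingQuot.mkAlgHom ℂ (HeisRel q d) (FreeAlgebra.ι ℂ 3)) = e := by
  have hr : ∀ ⦃x y⦄, HeisRel q d x y → FreeAlgebra.lift ℂ ![E, K, k, e] x =
      FreeAlgebra.lift ℂ ![E, K, k, e] y := by
    intro x y hxy
    cases hxy
    · simpa using h.KE
    · simpa using h.Kd
    · simpa using h.Ed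
    · simpa using h.ke
    · simpa using h.kd
    · simpa using h.ed
    · simpa using h.Kk
    · simpa using h.Ke
    · simpa using h.Ek
    · simpa using h.Ee
  refine ⟨RingQuot.liftAlgHom ℂ ⟨FreeAlgebra.lift ℂ ![E, K, k, e], hr⟩, ?_, ?_, ?_, ?_⟩ <;>
    simp [RingQuot.liftAlgHom_mkAlgHom_apply]

theorem heis_span (q : ℂ) (d : ℕ) (S : Submodule ℂ (RingQuot (HeisRel q d))) (h1 : 1 ∈ S)
    (hS : ∀ i : Fin 4, ∀ x ∈ S,
      RingQuot.mkAlgHom ℂ (HeisRel q d) (FreeAlgebra.ι ℂ i) * x ∈ S) : S = ⊤ := by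
  have key : ∀ a : FreeAlgebra ℂ (Fin 4), ∀ x ∈ S, RingQuot.mkAlgHom ℂ (HeisRel q d) a * x ∈ S := by
    intro a
    induction a using FreeAlgebra.induction with
    | grade0 r =>
      intro x hx
      rw [AlgHom.commutes, ← Algebra.smul_def]
      exact S.smul_mem _ hx
    | grade1 i => exact hS i
    | mul a b ha hb =>
      intro x hx
      rw [map_mul, mul_assoc]
      exact ha _ (hb _ hx)
    | add a b ha hb =>
      intro x hx
      rw [map_add, add_mul]
      exact S.add_mem (ha _ hx) (hb _ hx)
  rw [eq_top_iff]
  intro y _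
  obtain ⟨a, rfl⟩ := RingQuot.mkAlgHom_surjective ℂ (HeisRel q d) y
  simpa using key a 1 h1

/-- in the Heisenberg double `H` of the dual Taft algebra (`q` a
primitive `d`-th root of unity, `d > 1` odd), the monomials `η^i κ^j E^m K^n`
(`0 ≤ i, j, m, n ≤ d-1`) span `H`, and the assignment
`τ(κ) = q²κ + (q²−1)ηEK⁻¹`, `τ(η) = ηK⁻¹`, `τ(K) = K⁻¹`, `τ(E) = −EK⁻¹`
(with `K⁻¹ = K^{d-1}`) extends to an algebra anti-homomorphism `τ : H → H`. -/
theorem stmt15 (d : ℕ) (hd : 1 < d) (hodd : Odd d) (q : ℂ)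
    (hq : IsPrimitiveRoot q d) :
    letI H := RingQuot (HeisRel q d)
    let Eh : H := RingQuot.mkAlgHom ℂ (HeisRel q d) (FreeAlgebra.ι ℂ 0)
    let Kh : H := RingQuot.mkAlgHom ℂ (HeisRel q d) (FreeAlgebra.ι ℂ 1)
    let kh : H := RingQuot.mkAlgHom ℂ (HeisRel q d) (FreeAlgebra.ι ℂ 2)
    let eh : H := RingQuot.mkAlgHom ℂ (HeisRel q d) (FreeAlgebra.ι ℂ 3)
    (Submodule.span ℂ
        {x : H | ∃ i j m n : Fin d,
          x = eh ^ (i : ℕ) * kh ^ (j : ℕ) * Eh ^ (m : ℕ) * Kh ^ (n : ℕ)} = ⊤) ∧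
      ∃ τ : H →ₗ[ℂ] H,
        (∀ x y : H, τ (x * y) = τ y * τ x) ∧ τ 1 = 1 ∧
          τ kh = q ^ 2 • kh + (q ^ 2 - 1) • (eh * Eh * Kh ^ (d - 1)) ∧
          τ eh = eh * Kh ^ (d - 1) ∧
          τ Kh = Kh ^ (d - 1) ∧
          τ Eh = -(Eh * Kh ^ (d - 1)) := by
  intro Eh Kh kh eh
  have h : HRels (q ^ 2) d Eh Kh kh eh := heis_rels q d
  have hpr : IsPrimitiveRoot (q ^ 2) d :=
    hq.pow_of_coprime 2 (Nat.coprime_two_left.2 hodd)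
  refine ⟨?_, ?_⟩
  · rw [eq_top_iff]
    refine le_trans ?_ (h.span_le (by omega))
    refine (heis_span q d _ ?_ ?_).ge
    · exact Submodule.subset_span ⟨0, 0, 0, 0, by simp⟩
    intro i x hx
    refine h.span_closed _ rfl _ ?_ x hx
    fin_cases i
    · exact Or.inl rfl
    · exact Or.inr (Or.inl rfl)
    · exact Or.inr (Or.inr (Or.inl rfl))
    · exact Or.inr (Or.inr (Or.inr rfl))
  · have h1 : Kh * Kh ^ (d - 1) = 1 := by
      rw [← pow_succ', Nat.sub_add_cancel hd.le, h.Kd]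
    have h2 : Kh ^ (d - 1) * Kh = 1 := by
      rw [← pow_succ, Nat.sub_add_cancel hd.le, h.Kd]
    have hLd : (Kh ^ (d - 1)) ^ d = 1 := by
      rw [← pow_mul, mul_comm, pow_mul, h.Kd, one_pow]
    obtain ⟨f, fE, fK, fk, fe⟩ := heis_lift q d (h.op_rels hpr hd h1 h2 hLd)
    refine ⟨(MulOpposite.opLinearEquiv ℂ).symm.toLinearMap ∘ₗ f.toLinearMap, ?_, ?_, ?_, ?_, ?_, ?_⟩
    · intro x y; simp
    · simp
    · exact congrArg MulOpposite.unop fk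
    · exact congrArg MulOpposite.unop fe
    · exact congrArg MulOpposite.unop fK
    · exact congrArg MulOpposite.unop fE
end
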